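/- Let Δ = [a,b] ⊂ ℝ ⊂ ℂ, let f : Δ → ℝ be continuous, let α ∈ (0,1), let (n_k) be a strictly increasing sequence of naturals, and let p_{n_k}, q_{n_k} be polynomials of degree ≤ n_k with q_{n_k}(z) ≠ 0 on Δ, ‖p_{n_k}‖_Δ ≤ 1, ‖q_{n_k}‖_Δ = 1, and sup_{x∈Δ} |f(x) − p_{n_k}(x)/q_{n_k}(x)| ≤ α^{n_k} for all k. Define u(z,w) = limsup_{k→∞} (1/n_k)·log|q_{n_k}(z)·w − p_{n_k}(z)| and let u* be its upper semicontinuous regularization. Then every point x ∈ Δ with limsup_{k→∞} |q_{n_k}(x)|^{1/n_k} ≠ 0 satisfies u(x, f(x)) < u*(x, f(x)); in particular (x, f(x)) lies in the negligible set E = {(z,w) ∈ ℂ² : u(z,w) < u*(z,w)}, which is pluripolar in ℂ². -/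

import Mathlib

open Filter Metric

noncomputable section

/-- A subharmonic function on `ℂ` with values in `[-∞, ∞)`: upper semicontinuous,
never `+∞`, and dominated on every closed disk by every continuous function which is
harmonic inside the disk and dominates it on the boundary circle. -/
def SubharmonicFn (u : ℂ → EReal) : Prop :=
  UpperSemicontinuous u ∧ (∀ z, u z ≠ ⊤) ∧
  ∀ (c : ℂ) (r : ℝ), 0 < r →
    ∀ h : ℂ → ℝ, ContinuousOn h (closedBall c r) →
      (∃ F : ℂ → ℂ, DifferentiableOn ℂ F (ball c r) ∧ ∀ z ∈ ball c r, h z = (F z).re) →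
      (∀ z ∈ sphere c r, u z ≤ ((h z : ℝ) : EReal)) →
      ∀ z ∈ closedBall c r, u z ≤ ((h z : ℝ) : EReal)

/-- A plurisubharmonic function on a complex normed space: upper semicontinuous,
never `+∞`, and subharmonic along every complex line. -/
def PshFn {E : Type*} [NormedAddCommGroup E] [NormedSpace ℂ E] (u : E → EReal) : Prop :=
  UpperSemicontinuous u ∧ (∀ z, u z ≠ ⊤) ∧
  ∀ a v : E, SubharmonicFn (fun w : ℂ => u (a + w • v))

/-- A set is pluripolar if it is contained in the `-∞` set of a plurisubharmonic
function which is not identically `-∞`. -/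
def Pluripolar {E : Type*} [NormedAddCommGroup E] [NormedSpace ℂ E] (S : Set E) : Prop :=
  ∃ u : E → EReal, PshFn u ∧ (∃ z, u z ≠ ⊥) ∧ ∀ p ∈ S, u p = ⊥

/-- Extended-real logarithm: `elog 0 = -∞`, otherwise the usual real logarithm. -/
def elog (x : ℝ) : EReal := if x = 0 then ⊥ else ((Real.log x : ℝ) : EReal)


lemma comb_step {ι : Type*} (I : Finset ι) (M : ℕ) (hM : 1 ≤ M) (hI : I.card ≤ M) (x y : ι → ℂ) :
    ∃ c : ℂ, ‖c‖ ≤ 1 ∧ ∀ i ∈ I, ‖x i‖ * (1 / (4 * M : ℝ)) ≤ ‖x i + c * y i‖ ∧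
      ‖y i‖ * (1 / (4 * M : ℝ)) ≤ ‖x i + c * y i‖ := by
  have hM' : (1 : ℝ) ≤ M := by exact_mod_cast hM
  have key : ∃ j ∈ Finset.range (M + 1), ∀ i ∈ I,
      ‖y i‖ / (2 * M) ≤ ‖x i + ((j : ℂ) / M) * y i‖ := by
    by_contra! hcon
    haveI : Nonempty ι := ⟨(hcon 0 (by simp)).choose⟩
    choose! g hg using hcon
    obtain ⟨j, hj, j', hj', hne, he⟩ := Finset.exists_ne_map_eq_of_card_lt_of_maps_to
      (s := Finset.range (M + 1)) (t := I) (f := g) (by simp; omega) (fun j hj => (hg j hj).1)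
    have h1 := (hg j hj).2
    have h2 := (hg j' hj').2
    rw [← he] at h2
    have h3 : ‖(((j : ℂ) - j') / M) * y (g j)‖ < ‖y (g j)‖ / M := by
      calc _ = ‖(x (g j) + ((j : ℂ) / M) * y (g j)) - (x (g j) + ((j' : ℂ) / M) * y (g j))‖ := by
            congr 1; ring
        _ ≤ _ := norm_sub_le _ _
        _ < ‖y (g j)‖ / (2 * M) + ‖y (g j)‖ / (2 * M) := add_lt_add h1 h2
        _ = _ := by field_simp; ring
    have h4 : (1 : ℝ) ≤ ‖(j : ℂ) - j'‖ := by
      have : ((j : ℂ) - j') = ((j - j' : ℤ) : ℂ) := by push_cast; ring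
      rw [this, Complex.norm_intCast]
      have : (1 : ℤ) ≤ |(j : ℤ) - j'| := Int.one_le_abs (by omega)
      exact_mod_cast this
    rw [norm_mul, norm_div, Complex.norm_natCast] at h3
    have : ‖y (g j)‖ / M ≤ ‖(j : ℂ) - j'‖ / M * ‖y (g j)‖ := by
      rw [div_mul_eq_mul_div]
      gcongr
      nlinarith [norm_nonneg (y (g j))]
    linarith
  obtain ⟨j, hj, hy⟩ := key
  refine ⟨(j : ℂ) / M, ?_, fun i hi => ?_⟩
  · rw [norm_div, Complex.norm_natCast, Complex.norm_natCast]
    apply div_le_one_of_le₀ _ (by positivity)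
    have := Finset.mem_range.1 hj
    exact_mod_cast (by omega : j ≤ M)
  · have hc : ‖(j : ℂ) / M‖ ≤ 1 := by
      rw [norm_div, Complex.norm_natCast, Complex.norm_natCast]
      apply div_le_one_of_le₀ _ (by positivity)
      have := Finset.mem_range.1 hj
      exact_mod_cast (by omega : j ≤ M)
    have h1 := hy i hi
    have hy2 : ‖y i‖ / (2 * M) = 2 * (‖y i‖ * (1 / (4 * M : ℝ))) := by field_simp; ring
    have hp : 0 < (1 / (4 * M : ℝ)) := by positivity
    have hp1 : (1 / (4 * M : ℝ)) ≤ 1 / 4 := by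
      apply one_div_le_one_div_of_le <;> linarith
    refine ⟨?_, ?_⟩
    · by_cases h : ‖x i‖ ≤ 2 * ‖y i‖
      · rw [hy2] at h1
        nlinarith
      · push Not at h
        have h5 : ‖x i‖ - ‖y i‖ ≤ ‖x i + ((j : ℂ) / M) * y i‖ := by
          have := norm_sub_norm_le (x i) (-(((j : ℂ) / M) * y i))
          rw [norm_neg, sub_neg_eq_add, norm_mul] at this
          nlinarith [norm_nonneg (y i)]
        nlinarith [norm_nonneg (x i)]
    · rw [hy2] at h1
      nlinarith [norm_nonneg (y i), mul_nonneg (norm_nonneg (y i)) hp.le]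

lemma comb {ι κ : Type*} [DecidableEq κ] (I : Finset ι) (M : ℕ) (hM : 1 ≤ M) (hI : I.card ≤ M)
    (A : Finset κ) (f : κ → ι → ℂ) :
    ∃ c : κ → ℂ, (∀ a, ‖c a‖ ≤ 1) ∧ ∀ i ∈ I, ∀ a ∈ A,
      ‖f a i‖ * (1 / (4 * M : ℝ)) ^ A.card ≤ ‖∑ a ∈ A, c a * f a i‖ := by
  have hM' : (1 : ℝ) ≤ M := by exact_mod_cast hM
  have hp : 0 < (1 / (4 * M : ℝ)) := by positivity
  have hp1 : (1 / (4 * M : ℝ)) ≤ 1 := by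
    rw [div_le_one (by positivity)]; linarith
  induction A using Finset.induction_on with
  | empty => exact ⟨fun _ => 0, by simp, by simp⟩
  | insert b A hb ih =>
    obtain ⟨c, hc, hcA⟩ := ih
    obtain ⟨e, he, heI⟩ := comb_step I M hM hI (fun i => ∑ a ∈ A, c a * f a i) (f b)
    refine ⟨Function.update c b e, ?_, ?_⟩
    · intro a
      by_cases h : a = b
      · subst h; simpa using he
      · simpa [Function.update_of_ne h] using hc a
    · intro i hi a ha
      have hsum : ∑ a ∈ insert b A, Function.update c b e a * f a i
          = (∑ a ∈ A, c a * f a i) + e * f b i := by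
        rw [Finset.sum_insert hb, add_comm]
        congr 1
        · apply Finset.sum_congr rfl
          intro a' ha'
          rw [Function.update_of_ne]
          intro h; exact hb (h ▸ ha')
        · simp
      rw [hsum, Finset.card_insert_of_notMem hb, pow_succ]
      rcases Finset.mem_insert.1 ha with rfl | ha
      · refine le_trans ?_ (heI i hi).2
        have : (1 / (4 * M : ℝ)) ^ A.card ≤ 1 := pow_le_one₀ hp.le hp1
        have h2 : (1 / (4 * M : ℝ)) ^ A.card * (1 / (4 * M : ℝ)) ≤ (1 / (4 * M : ℝ)) := by nlinarith
        exact mul_le_mul_of_nonneg_left h2 (norm_nonneg _)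
      · refine le_trans ?_ (heI i hi).1
        rw [← mul_assoc]
        exact mul_le_mul_of_nonneg_right (hcA i hi a ha) hp.le


/-- layer of the logarithm between two scales -/
def bl (η η' r : ℝ) : ℝ := Real.log (max η r) - Real.log (max η' r)

lemma bl_nonneg {η η' : ℝ} (h' : 0 < η') (h : η' ≤ η) (r : ℝ) : 0 ≤ bl η η' r := by
  unfold bl
  have : Real.log (max η' r) ≤ Real.log (max η r) :=
    Real.log_le_log (lt_max_of_lt_left h') (max_le_max_right _ h)
  linarith

lemma bl_anti {η η' : ℝ} (h' : 0 < η') (h : η' ≤ η) {r r' : ℝ} (hr : r ≤ r') :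
    bl η η' r' ≤ bl η η' r := by
  unfold bl
  have h1 : 0 < max η r := lt_max_of_lt_left (h'.trans_le h)
  have h2 : 0 < max η' r := lt_max_of_lt_left h'
  have h3 : 0 < max η r' := lt_max_of_lt_left (h'.trans_le h)
  have h4 : 0 < max η' r' := lt_max_of_lt_left h'
  rw [← Real.log_div h3.ne' h4.ne', ← Real.log_div h1.ne' h2.ne']
  apply Real.log_le_log (by positivity)
  rw [div_le_div_iff₀ h4 h2]
  rcases le_total r' η with hA | hA
  · rw [max_eq_left hA, max_eq_left (hr.trans hA)]
    have := max_le_max_left η' hr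
    exact mul_le_mul_of_nonneg_left this (by linarith)
  · rw [max_eq_right hA, max_eq_right (h.trans hA), mul_comm]
    have := max_le_max_right r h
    exact mul_le_mul_of_nonneg_right this (by linarith)

lemma nearest_bound {m : ℕ} (x : ℕ → ℂ) {η η' : ℝ} (h' : 0 < η') (h : η' ≤ η) (X : Finset ℕ)
    (hX : X ⊆ Finset.range m) (B : ℝ) (hB : 0 ≤ B)
    (hb : ∀ i ∈ X, ∑ j ∈ Finset.range m, bl η η' ‖x i - x j‖ ≤ B) (ζ : ℂ) :
    ∑ i ∈ X, bl η η' (2 * ‖x i - ζ‖) ≤ B := by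
  rcases X.eq_empty_or_nonempty with rfl | hne
  · simpa using hB
  obtain ⟨i0, hi0, hmin⟩ := X.exists_min_image (fun i => ‖x i - ζ‖) hne
  refine le_trans ?_ (hb i0 hi0)
  calc _ ≤ ∑ i ∈ X, bl η η' ‖x i0 - x i‖ := by
        apply Finset.sum_le_sum
        intro i hi
        apply bl_anti h' h
        have := norm_sub_le_norm_sub_add_norm_sub (x i0) ζ (x i)
        have h2 := hmin i hi
        rw [norm_sub_rev ζ (x i)] at this
        linarith
    _ ≤ _ := Finset.sum_le_sum_of_subset_of_nonneg hX (fun _ _ _ => bl_nonneg h' h _)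

lemma energy_lower {m : ℕ} (hm : 0 < m) (x : ℕ → ℂ) {η η' : ℝ} (h' : 0 < η') (h : η' ≤ η)
    (Z : Multiset ℂ) (hZ : 0 < Z.card) (σ : ℝ) (hσ : 0 < σ)
    (hx : ∀ i, Z.card * σ ≤ (Z.map (fun ζ => bl η η' (2 * ‖x i - ζ‖))).sum) :
    σ * m ^ 2 / 4 ≤ ∑ i ∈ Finset.range m, ∑ j ∈ Finset.range m, bl η η' ‖x i - x j‖ := by
  by_contra! hA
  set H : ℕ → ℝ := fun i => ∑ j ∈ Finset.range m, bl η η' ‖x i - x j‖ with hH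
  have hm' : (0 : ℝ) < m := by exact_mod_cast hm
  set X := (Finset.range m).filter (fun i => H i ≤ σ * m / 2) with hXdef
  set Y := (Finset.range m).filter (fun i => ¬ H i ≤ σ * m / 2) with hYdef
  have hcard : X.card + Y.card = m := by
    have := Finset.card_filter_add_card_filter_not (s := Finset.range m) (fun i => H i ≤ σ * m / 2)
    rwa [Finset.card_range] at this
  have hY : (Y.card : ℝ) * (σ * m / 2) ≤ ∑ i ∈ Finset.range m, H i := by
    calc _ = ∑ i ∈ Y, (σ * m / 2) := by simp
      _ ≤ ∑ i ∈ Y, H i := by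
        apply Finset.sum_le_sum
        intro i hi
        exact (not_le.1 (Finset.mem_filter.1 hi).2).le
      _ ≤ _ := Finset.sum_le_sum_of_subset_of_nonneg (Finset.filter_subset _ _)
        (fun i _ _ => Finset.sum_nonneg (fun _ _ => bl_nonneg h' h _))
  have hX : (X.card : ℝ) * (Z.card * σ) ≤ Z.card * (σ * m / 2) := by
    calc _ = ∑ i ∈ X, (Z.card * σ) := by simp
      _ ≤ ∑ i ∈ X, (Z.map (fun ζ => bl η η' (2 * ‖x i - ζ‖))).sum :=
        Finset.sum_le_sum (fun i _ => hx i)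
      _ = (Z.map (fun ζ => ∑ i ∈ X, bl η η' (2 * ‖x i - ζ‖))).sum := by
        exact Multiset.sum_map_sum_map X.val Z
      _ ≤ (Z.map (fun ζ => σ * m / 2)).sum := by
        apply Multiset.sum_map_le_sum_map
        intro ζ _
        exact nearest_bound x h' h X (Finset.filter_subset _ _) _ (by positivity)
          (fun i hi => (Finset.mem_filter.1 hi).2) ζ
      _ = _ := by simp
  have hZ' : (0 : ℝ) < Z.card := by exact_mod_cast hZ
  have h1 : (X.card : ℝ) ≤ m / 2 := by
    have : Z.card * σ * (X.card : ℝ) ≤ Z.card * σ * (m / 2) := by linarith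
    exact le_of_mul_le_mul_left this (by positivity)
  have h2 : (Y.card : ℝ) < m / 2 := by
    have : (Y.card : ℝ) * (σ * m / 2) < (m / 2) * (σ * m / 2) := by nlinarith
    exact lt_of_mul_lt_mul_right this (by positivity)
  have h3 : (X.card : ℝ) + Y.card = m := by exact_mod_cast hcard
  linarith

lemma leja (K : Set ℂ) (hne : K.Nonempty) (C : ℝ) (hC : ∀ T : Polynomial ℂ, T.Monic → 1 ≤ T.natDegree →
    ∃ z ∈ K, Real.exp (-C * T.natDegree) < ‖T.eval z‖) :
    ∃ x : ℕ → ℂ, (∀ i, x i ∈ K) ∧ ∀ j : ℕ, Real.exp (-C * j) ≤ ∏ i ∈ Finset.range j, ‖x j - x i‖ := by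
  have key : ∀ (j : ℕ) (y : ∀ i < j, ℂ), ∃ z ∈ K, Real.exp (-C * j) ≤
      ∏ i ∈ (Finset.range j).attach, ‖z - y i.1 (Finset.mem_range.1 i.2)‖ := by
    intro j y
    rcases Nat.eq_zero_or_pos j with rfl | hj
    · obtain ⟨z, hz⟩ := hne
      exact ⟨z, hz, by simp⟩
    · set T : Polynomial ℂ := ∏ i ∈ (Finset.range j).attach,
        (Polynomial.X - Polynomial.C (y i.1 (Finset.mem_range.1 i.2))) with hT
      have hTm : T.Monic := Polynomial.monic_prod_of_monic _ _ (fun i _ => Polynomial.monic_X_sub_C _)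
      have hTd : T.natDegree = j := by
        rw [hT, Polynomial.natDegree_prod_of_monic _ _ (fun i _ => Polynomial.monic_X_sub_C _)]
        simp
      obtain ⟨z, hz, hlt⟩ := hC T hTm (by omega)
      refine ⟨z, hz, ?_⟩
      rw [hTd, hT, Polynomial.eval_prod, norm_prod] at hlt
      simpa using hlt.le
  choose g hgK hg using key
  let x : ℕ → ℂ := fun j => Nat.strongRec (motive := fun _ => ℂ) (fun j y => g j y) j
  have hx : ∀ j, x j = g j (fun i _ => x i) := by
    intro j
    simp only [x]
    rw [Nat.strongRec_eq]
  refine ⟨x, fun i => by rw [hx]; exact hgK _ _, fun j => ?_⟩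
  have := hg j (fun i _ => x i)
  rw [← hx j] at this
  rwa [Finset.prod_attach (Finset.range j) (fun i => ‖x j - x i‖)] at this

lemma scale_step (K : Set ℂ) (hK : IsCompact K) (hne : K.Nonempty) {ι : Type*} (r : ι → Polynomial ℂ)
    (n : ι → ℕ) (hn : ∀ i, 1 ≤ n i) (hdeg : ∀ i, (r i).natDegree ≤ n i) (t s : ℝ) (hts : t < s)
    (ht : ∀ i, ∀ z ∈ K, ‖(r i).eval z‖ ≤ Real.exp (t * n i))
    (hs : ∀ z ∈ K, ∀ η > 0, ∃ z', dist z' z < η ∧ ∃ i, Real.exp (s * n i) ≤ ‖(r i).eval z'‖)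
    (η : ℝ) (hη : 0 < η) :
    ∃ (F : Polynomial ℂ) (m : ℕ), F.natDegree ≤ m ∧ 0 < m ∧ ∀ z ∈ K, ∃ z', dist z' z < η ∧
      F.eval z' ≠ 0 ∧ Real.exp ((s - t) / 2 * m) * ‖F.eval z‖ ≤ ‖F.eval z'‖ := by
  classical
  have : Nonempty ι := by
    obtain ⟨z, hz⟩ := hne
    obtain ⟨_, _, i, _⟩ := hs z hz 1 one_pos
    exact ⟨i⟩
  choose! g hg1 k hk using (fun z hz => hs z hz (η / 2) (by positivity))
  obtain ⟨S, hSK, hcov⟩ := hK.elim_nhds_subcover (fun z => ball z (η / 2))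
    (fun z hz => ball_mem_nhds _ (by positivity))
  have hSne : S.Nonempty := by
    obtain ⟨z, hz⟩ := hne
    obtain ⟨c, hc, _⟩ := Set.mem_iUnion₂.1 (hcov hz)
    exact ⟨c, hc⟩
  set A := S.image k with hA
  set M := S.card with hM
  have hM1 : 1 ≤ M := Finset.card_pos.2 hSne
  set κ : ℝ := (1 / (4 * M : ℝ)) ^ A.card with hκ
  have hM1' : (1 : ℝ) ≤ M := by exact_mod_cast hM1
  have hκ0 : 0 < κ := by positivity
  set Pn := ∏ i ∈ A, n i with hPn
  have hPn1 : 1 ≤ Pn := Finset.one_le_prod' (fun i _ => hn i)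
  -- choose m
  have hex : ∃ N : ℕ, (A.card : ℝ) / κ ≤ Real.exp ((s - t) / 2 * N) := by
    have h1 : Tendsto (fun N : ℕ => Real.exp ((s - t) / 2 * N)) atTop atTop := by
      apply Real.tendsto_exp_atTop.comp
      apply Tendsto.const_mul_atTop (by linarith) tendsto_natCast_atTop_atTop
    exact (h1.eventually_ge_atTop _).exists
  obtain ⟨N, hN⟩ := hex
  set m := Pn * (N + 1) with hm
  have hmN : N ≤ m := by nlinarith
  have hm0 : 0 < m := by positivity
  have hdvd : ∀ i ∈ A, n i * (m / n i) = m := fun i hi =>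
    Nat.mul_div_cancel' ((Finset.dvd_prod_of_mem n hi).trans (Dvd.intro _ rfl))
  obtain ⟨c, hc1, hc⟩ := comb S M hM1 le_rfl A (fun i z => (r i).eval (g z) ^ (m / n i))
  have hbig : ∀ i ∈ A, ∀ z τ, Real.exp (τ * n i) ≤ ‖(r i).eval z‖ →
      Real.exp (τ * m) ≤ ‖(r i).eval z ^ (m / n i)‖ := by
    intro i hi z τ h
    rw [norm_pow]
    have : Real.exp (τ * m) = Real.exp (τ * n i) ^ (m / n i) := by
      rw [← Real.exp_nat_mul]
      congr 1
      conv_lhs => rw [← hdvd i hi]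
      push_cast; ring
    rw [this]
    exact pow_le_pow_left₀ (Real.exp_pos _).le h _
  have hsmall : ∀ i ∈ A, ∀ z ∈ K, ‖(r i).eval z ^ (m / n i)‖ ≤ Real.exp (t * m) := by
    intro i hi z hz
    rw [norm_pow]
    have : Real.exp (t * m) = Real.exp (t * n i) ^ (m / n i) := by
      rw [← Real.exp_nat_mul]
      congr 1
      conv_lhs => rw [← hdvd i hi]
      push_cast; ring
    rw [this]
    exact pow_le_pow_left₀ (norm_nonneg _) (ht i z hz) _
  refine ⟨∑ i ∈ A, Polynomial.C (c i) * r i ^ (m / n i), m, ?_, hm0, ?_⟩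
  · apply Polynomial.natDegree_sum_le_of_forall_le
    intro i hi
    refine (Polynomial.natDegree_C_mul_le _ _).trans ?_
    refine Polynomial.natDegree_pow_le.trans ?_
    calc _ ≤ (m / n i) * n i := Nat.mul_le_mul_left _ (hdeg i)
      _ = m := by rw [mul_comm]; exact hdvd i hi
  · intro z hz
    obtain ⟨y, hy, hzy⟩ := Set.mem_iUnion₂.1 (hcov hz)
    have hF : ∀ w, (∑ i ∈ A, Polynomial.C (c i) * r i ^ (m / n i)).eval w
        = ∑ i ∈ A, c i * (r i).eval w ^ (m / n i) := by
      intro w; simp [Polynomial.eval_finset_sum]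
    have hkA : k y ∈ A := Finset.mem_image_of_mem k hy
    have h1 : Real.exp (s * m) * κ ≤ ‖∑ i ∈ A, c i * (r i).eval (g y) ^ (m / n i)‖ :=
      le_trans (mul_le_mul_of_nonneg_right (hbig _ hkA _ _ (hk y (hSK y hy))) hκ0.le) (hc y hy _ hkA)
    refine ⟨g y, ?_, ?_, ?_⟩
    · have h1 := hg1 y (hSK y hy)
      have h2 : dist z y < η / 2 := hzy
      have := dist_triangle_right (g y) z y
      linarith
    · rw [hF, ← norm_pos_iff]
      exact lt_of_lt_of_le (by positivity) h1
    · rw [hF, hF]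
      refine le_trans ?_ h1
      have h2 : ‖∑ i ∈ A, c i * (r i).eval z ^ (m / n i)‖ ≤ A.card * Real.exp (t * m) := by
        refine (norm_sum_le _ _).trans ?_
        rw [← nsmul_eq_mul]
        apply Finset.sum_le_card_nsmul
        intro i hi
        rw [norm_mul]
        calc _ ≤ 1 * ‖(r i).eval z ^ (m / n i)‖ := mul_le_mul_of_nonneg_right (hc1 i) (norm_nonneg _)
          _ ≤ _ := by rw [one_mul]; exact hsmall i hi z hz
      have h3 : (A.card : ℝ) / κ ≤ Real.exp ((s - t) / 2 * m) := by
        refine hN.trans (Real.exp_le_exp.2 ?_)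
        apply mul_le_mul_of_nonneg_left _ (by linarith)
        exact_mod_cast hmN
      rw [div_le_iff₀ hκ0] at h3
      calc _ ≤ Real.exp ((s - t) / 2 * m) * (A.card * Real.exp (t * m)) := by gcongr
        _ ≤ Real.exp ((s - t) / 2 * m) * ((Real.exp ((s - t) / 2 * m) * κ) * Real.exp (t * m)) := by gcongr
        _ = (Real.exp ((s - t) / 2 * m) * Real.exp ((s - t) / 2 * m) * Real.exp (t * m)) * κ := by ring
        _ = _ := by
          rw [← Real.exp_add, ← Real.exp_add]; congr 2; ring

lemma scale_roots (K : Set ℂ) (hne : K.Nonempty) (F : Polynomial ℂ) (m : ℕ)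
    (hFm : F.natDegree ≤ m) (hm : 0 < m) (τ : ℝ) (hτ : 0 < τ) (η : ℝ) (hη : 0 < η)
    (hF : ∀ z ∈ K, ∃ z', dist z' z < η * τ / 4 ∧
      F.eval z' ≠ 0 ∧ Real.exp (τ * m) * ‖F.eval z‖ ≤ ‖F.eval z'‖) :
    ∃ η' : ℝ, 0 < η' ∧ η' ≤ η ∧ ∃ Z : Multiset ℂ, 0 < Z.card ∧ ∀ z ∈ K,
      Z.card * (τ / 2) ≤ (Z.map (fun ζ => bl η η' (2 * ‖z - ζ‖))).sum := by
  have hF0 : F ≠ 0 := by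
    obtain ⟨z, hz⟩ := hne
    obtain ⟨z', -, h, -⟩ := hF z hz
    rintro rfl; simp at h
  have hsplit := IsAlgClosed.splits F
  have hcard : F.roots.card = F.natDegree := (Polynomial.splits_iff_card_roots.1 hsplit)
  have heval : ∀ z, ‖F.eval z‖ = ‖F.leadingCoeff‖ * (F.roots.map (fun ζ => ‖z - ζ‖)).prod := by
    intro z
    conv_lhs => rw [hsplit.eq_prod_roots]
    rw [Polynomial.eval_mul, Polynomial.eval_C, norm_mul, Polynomial.eval_multiset_prod]
    congr 1
    rw [Multiset.map_map]
    refine (map_multiset_prod (normHom : ℂ →*₀ ℝ) _).trans ?_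
    rw [Multiset.map_map]
    simp
  have hlc : 0 < ‖F.leadingCoeff‖ := norm_pos_iff.2 (Polynomial.leadingCoeff_ne_zero.2 hF0)
  set Z := F.roots with hZ
  have hZ0 : 0 < Z.card := by
    by_contra h
    have h0 : Z = 0 := Multiset.card_eq_zero.1 (by omega)
    obtain ⟨z, hz⟩ := hne
    obtain ⟨z', -, -, h⟩ := hF z hz
    rw [heval, heval, h0] at h
    simp at h
    have : 1 < Real.exp (τ * m) := Real.one_lt_exp_iff.2 (by positivity)
    nlinarith
  refine ⟨η * Real.exp (-(Z.card * (τ / 2))), by positivity, ?_, Z, hZ0, ?_⟩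
  · have : Real.exp (-(Z.card * (τ / 2))) ≤ 1 := by
      rw [Real.exp_le_one_iff]
      have : 0 ≤ (Z.card * (τ / 2)) := by positivity
      linarith
    nlinarith
  intro z hz
  set η' := η * Real.exp (-(Z.card * (τ / 2))) with hη'
  have hη'0 : 0 < η' := by positivity
  have hle : η' ≤ η := by
    have : Real.exp (-(Z.card * (τ / 2))) ≤ 1 := by
      rw [Real.exp_le_one_iff]
      have : 0 ≤ (Z.card * (τ / 2)) := by positivity
      linarith
    nlinarith
  by_cases hcl : ∃ ζ ∈ Z, 2 * ‖z - ζ‖ < η'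
  · obtain ⟨ζ, hζ, hlt⟩ := hcl
    have h1 : bl η η' (2 * ‖z - ζ‖) = Z.card * (τ / 2) := by
      unfold bl
      rw [max_eq_left (hlt.le.trans hle), max_eq_left hlt.le, hη',
        Real.log_mul hη.ne' (Real.exp_pos _).ne', Real.log_exp]
      ring
    rw [← h1]
    apply Multiset.single_le_sum
    · intro x hx
      obtain ⟨y, -, rfl⟩ := Multiset.mem_map.1 hx
      exact bl_nonneg hη'0 hle _
    · exact Multiset.mem_map.2 ⟨ζ, hζ, rfl⟩
  · push Not at hcl
    obtain ⟨z', hd, hz'0, hbig⟩ := hF z hz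
    rw [heval, heval] at hbig
    have hb2 : Real.exp (τ * m) * (Z.map (fun ζ => ‖z - ζ‖)).prod ≤ (Z.map (fun ζ => ‖z' - ζ‖)).prod := by
      have : ‖F.leadingCoeff‖ * (Real.exp (τ * m) * (Z.map (fun ζ => ‖z - ζ‖)).prod) ≤
          ‖F.leadingCoeff‖ * (Z.map (fun ζ => ‖z' - ζ‖)).prod := by linarith
      exact le_of_mul_le_mul_left this hlc
    have hpt : ∀ ζ ∈ Z, ‖z' - ζ‖ ≤ ‖z - ζ‖ * Real.exp (τ / 2 + bl η η' (2 * ‖z - ζ‖)) := by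
      intro ζ hζ
      have h0 := hcl ζ hζ
      have hx : 0 < ‖z - ζ‖ := by linarith
      have hmax : 0 < max η (2 * ‖z - ζ‖) := lt_max_of_lt_left hη
      unfold bl
      rw [max_eq_right h0, Real.exp_add, Real.exp_sub, Real.exp_log hmax, Real.exp_log (by linarith)]
      have h1 : ‖z' - ζ‖ ≤ ‖z - ζ‖ + η * τ / 4 := by
        have := norm_sub_le_norm_sub_add_norm_sub z' z ζ
        rw [dist_eq_norm] at hd
        linarith
      have h2 : τ / 2 + 1 ≤ Real.exp (τ / 2) := Real.add_one_le_exp _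
      have h3 : ‖z - ζ‖ * (Real.exp (τ / 2) * (max η (2 * ‖z - ζ‖) / (2 * ‖z - ζ‖)))
          = Real.exp (τ / 2) * max η (2 * ‖z - ζ‖) / 2 := by field_simp
      rw [h3]
      have h4 : η ≤ max η (2 * ‖z - ζ‖) := le_max_left _ _
      have h5 : 2 * ‖z - ζ‖ ≤ max η (2 * ‖z - ζ‖) := le_max_right _ _
      nlinarith
    have hprod : (Z.map (fun ζ => ‖z' - ζ‖)).prod ≤ (Z.map (fun ζ => ‖z - ζ‖)).prod *
        Real.exp (Z.card * (τ / 2) + (Z.map (fun ζ => bl η η' (2 * ‖z - ζ‖))).sum) := by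
      have h1 : (Z.map (fun ζ => ‖z' - ζ‖)).prod ≤
          (Z.map (fun ζ => ‖z - ζ‖ * Real.exp (τ / 2 + bl η η' (2 * ‖z - ζ‖)))).prod :=
        Multiset.prod_map_le_prod_map₀ _ _ (fun _ _ => norm_nonneg _) hpt
      refine h1.trans (le_of_eq ?_)
      rw [Multiset.prod_map_mul]
      congr 1
      rw [show Z.card * (τ / 2) + (Z.map (fun ζ => bl η η' (2 * ‖z - ζ‖))).sum
        = (Z.map (fun ζ => τ / 2 + bl η η' (2 * ‖z - ζ‖))).sum by
          rw [Multiset.sum_map_add]; simp, Real.exp_multiset_sum, Multiset.map_map]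
      rfl
    have hpos : 0 < (Z.map (fun ζ => ‖z - ζ‖)).prod := by
      apply Multiset.prod_pos
      intro x hx
      obtain ⟨ζ, hζ, rfl⟩ := Multiset.mem_map.1 hx
      have := hcl ζ hζ
      linarith
    have h3 : Real.exp (τ * m) ≤
        Real.exp (Z.card * (τ / 2) + (Z.map (fun ζ => bl η η' (2 * ‖z - ζ‖))).sum) := by
      have := hb2.trans hprod
      rw [mul_comm] at this
      exact le_of_mul_le_mul_left this hpos
    have h4 := Real.exp_le_exp.1 h3
    have h5 : (Z.card : ℝ) ≤ m := by exact_mod_cast hcard.trans_le hFm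
    nlinarith

theorem one_dim (K : Set ℂ) (hK : IsCompact K) {ι : Type*} (r : ι → Polynomial ℂ)
    (n : ι → ℕ) (hn : ∀ i, 1 ≤ n i) (hdeg : ∀ i, (r i).natDegree ≤ n i) (t s : ℝ) (hts : t < s)
    (ht : ∀ i, ∀ z ∈ K, ‖(r i).eval z‖ ≤ Real.exp (t * n i))
    (hs : ∀ z ∈ K, ∀ η > 0, ∃ z', dist z' z < η ∧ ∃ i, Real.exp (s * n i) ≤ ‖(r i).eval z'‖)
    (C : ℝ) : ∃ T : Polynomial ℂ, T.Monic ∧ 1 ≤ T.natDegree ∧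
      ∀ z ∈ K, ‖T.eval z‖ ≤ Real.exp (-C * T.natDegree) := by
  rcases K.eq_empty_or_nonempty with rfl | hne
  · exact ⟨Polynomial.X, Polynomial.monic_X, by simp, by simp⟩
  by_contra! hcon
  obtain ⟨x, hxK, hx⟩ := leja K hne C hcon
  obtain ⟨R, hR⟩ := hK.isBounded.exists_norm_le
  set R' := max 1 (2 * R) with hR'
  have hR'1 : 1 ≤ R' := le_max_left _ _
  set C₁ := |C| + Real.log R' + 1 with hC₁
  have hlogR : 0 ≤ Real.log R' := Real.log_nonneg hR'1
  have hC₁1 : 1 ≤ C₁ := by have := abs_nonneg C; linarith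
  set τ := (s - t) / 2 with hτ
  have hτ0 : 0 < τ := by rw [hτ]; linarith
  have step : ∀ η : ℝ, 0 < η → ∃ η' : ℝ, 0 < η' ∧ η' ≤ η ∧ ∃ Z : Multiset ℂ, 0 < Z.card ∧ ∀ z ∈ K,
      Z.card * (τ / 2) ≤ (Z.map (fun ζ => bl η η' (2 * ‖z - ζ‖))).sum := by
    intro η hη
    obtain ⟨F, m, h1, h2, h3⟩ := scale_step K hK hne r n hn hdeg t s hts ht hs (η * τ / 4) (by positivity)
    exact scale_roots K hne F m h1 h2 τ hτ0 η hη h3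
  choose nxt hpos hle Z hZ hb using step
  let e : ℕ → {η : ℝ // 0 < η} := fun l => Nat.rec ⟨1, one_pos⟩ (fun _ p => ⟨nxt p.1 p.2, hpos _ _⟩) l
  let η : ℕ → ℝ := fun l => (e l).1
  have hη0 : η 0 = 1 := rfl
  have hηpos : ∀ l, 0 < η l := fun l => (e l).2
  have hηle : ∀ l, η (l + 1) ≤ η l := fun l => hle (e l).1 (e l).2
  obtain ⟨J, hJ⟩ := exists_nat_gt (2 * C₁ / (τ / 2 / 4))
  have hηJ : η J ≤ 1 := by
    rw [← hη0]; exact antitone_nat_of_succ_le hηle (Nat.zero_le J)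
  set H := -Real.log (η J) with hH
  have hH0 : 0 ≤ H := by
    have := Real.log_nonpos (hηpos J).le hηJ; linarith
  obtain ⟨m, hm⟩ := exists_nat_gt (max 1 H)
  have hm1 : (1 : ℝ) < m := (le_max_left _ _).trans_lt hm
  have hmH : H < m := (le_max_right _ _).trans_lt hm
  have hm0 : 0 < m := by
    have : (0 : ℝ) < m := by linarith
    exact_mod_cast this
  have htel : ∀ ρ : ℝ, ∑ l ∈ Finset.range J, bl (η l) (η (l + 1)) ρ
      = Real.log (max 1 ρ) - Real.log (max (η J) ρ) := by
    intro ρ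
    unfold bl
    rw [Finset.sum_range_sub' (fun l => Real.log (max (η l) ρ)), hη0]
  -- lower bound
  have hlow : J * (τ / 2 * m ^ 2 / 4) ≤ ∑ l ∈ Finset.range J,
      ∑ i ∈ Finset.range m, ∑ j ∈ Finset.range m, bl (η l) (η (l + 1)) ‖x i - x j‖ := by
    calc _ = ∑ l ∈ Finset.range J, (τ / 2 * m ^ 2 / 4) := by simp
      _ ≤ _ := by
        apply Finset.sum_le_sum
        intro l _
        exact energy_lower hm0 x (hηpos (l+1)) (hηle l) (Z (e l).1 (e l).2) (hZ _ _) (τ / 2) (by positivity)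
          (fun i => hb _ _ _ (hxK i))
  set G : ℕ → ℕ → ℝ := fun i j => Real.log (max 1 ‖x i - x j‖) - Real.log (max (η J) ‖x i - x j‖) with hG
  have hGeq : ∑ l ∈ Finset.range J,
      ∑ i ∈ Finset.range m, ∑ j ∈ Finset.range m, bl (η l) (η (l + 1)) ‖x i - x j‖
      = ∑ i ∈ Finset.range m, ∑ j ∈ Finset.range m, G i j := by
    rw [Finset.sum_comm]
    apply Finset.sum_congr rfl
    intro i _
    rw [Finset.sum_comm]
    apply Finset.sum_congr rfl
    intro j _
    rw [htel]
  have hGsymm : ∀ i j, G i j = G j i := by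
    intro i j; simp only [hG, norm_sub_rev]
  have hGdiag : ∀ i, G i i = H := by
    intro i
    simp only [hG, sub_self, norm_zero]
    rw [max_eq_left zero_le_one, max_eq_left (hηpos J).le]; simp [hH]
  have hGrow : ∀ i : ℕ, ∑ j ∈ Finset.range i, G i j ≤ C₁ * i := by
    intro i
    have hprod := hx i
    have hp0 : 0 < ∏ j ∈ Finset.range i, ‖x i - x j‖ := lt_of_lt_of_le (Real.exp_pos _) hprod
    have hne0 : ∀ j ∈ Finset.range i, ‖x i - x j‖ ≠ 0 := Finset.prod_ne_zero_iff.1 hp0.ne'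
    have hlog : -C * i ≤ ∑ j ∈ Finset.range i, Real.log ‖x i - x j‖ := by
      rw [← Real.log_prod hne0, Real.le_log_iff_exp_le hp0]
      exact hprod
    have h1 : ∑ j ∈ Finset.range i, G i j ≤ ∑ j ∈ Finset.range i, (Real.log R' - Real.log ‖x i - x j‖) := by
      apply Finset.sum_le_sum
      intro j hj
      have h0 : 0 < ‖x i - x j‖ := lt_of_le_of_ne (norm_nonneg _) (hne0 j hj).symm
      apply sub_le_sub
      · apply Real.log_le_log (by positivity)
        apply max_le hR'1
        have := norm_sub_le (x i) (x j)
        have h2 := hR _ (hxK i)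
        have h3 := hR _ (hxK j)
        exact le_max_of_le_right (by linarith)
      · exact Real.log_le_log h0 (le_max_right _ _)
    refine h1.trans ?_
    rw [Finset.sum_sub_distrib]
    simp only [Finset.sum_const, Finset.card_range, nsmul_eq_mul]
    have hi : (0 : ℝ) ≤ i := by positivity
    have := le_abs_self C
    nlinarith
  have hup : ∀ N : ℕ, ∑ i ∈ Finset.range N, ∑ j ∈ Finset.range N, G i j ≤ C₁ * N ^ 2 + N * H := by
    intro N
    induction N with
    | zero => simp
    | succ N ih =>
      have h1 : ∑ i ∈ Finset.range (N + 1), ∑ j ∈ Finset.range (N + 1), G i j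
          = (∑ i ∈ Finset.range N, ∑ j ∈ Finset.range N, G i j)
            + 2 * (∑ j ∈ Finset.range N, G N j) + G N N := by
        rw [Finset.sum_range_succ]
        simp only [Finset.sum_range_succ]
        rw [Finset.sum_add_distrib]
        have : ∑ i ∈ Finset.range N, G i N = ∑ i ∈ Finset.range N, G N i :=
          Finset.sum_congr rfl (fun i _ => hGsymm _ _)
        rw [this]; ring
      rw [h1, hGdiag]
      have := hGrow N
      push_cast
      nlinarith
  have h1 := hup m
  rw [← hGeq] at h1
  have h2 := hlow.trans h1
  rw [div_lt_iff₀ (by positivity)] at hJ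
  have h3 : (m : ℝ) * H ≤ C₁ * m ^ 2 := by nlinarith
  have h4 : (0 : ℝ) < (m : ℝ) ^ 2 := by positivity
  nlinarith


def ev (d : ℕ) (c : ℕ → ℕ → ℂ) (p : ℂ × ℂ) : ℂ :=
  ∑ i ∈ Finset.range (d + 1), ∑ j ∈ Finset.range (d + 1), c i j * p.1 ^ i * p.2 ^ j

def Nrm (d : ℕ) (c : ℕ → ℕ → ℂ) : Prop :=
  (∀ i ≤ d, ∀ j ≤ d, ‖c i j‖ ≤ 1) ∧ ∃ i ≤ d, ∃ j ≤ d, ‖c i j‖ = 1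

def Bf (p : ℂ × ℂ) : ℝ := 2 * Real.log 2 + Real.log (max 1 ‖p.1‖) + Real.log (max 1 ‖p.2‖)

lemma Bf_nonneg (p : ℂ × ℂ) : 0 ≤ Bf p := by
  unfold Bf
  have h1 : 0 ≤ Real.log 2 := Real.log_nonneg (by norm_num)
  have h2 : 0 ≤ Real.log (max 1 ‖p.1‖) := Real.log_nonneg (le_max_left _ _)
  have h3 : 0 ≤ Real.log (max 1 ‖p.2‖) := Real.log_nonneg (le_max_left _ _)
  linarith

lemma Bf_cont : Continuous Bf := by
  unfold Bf
  have h1 : Continuous fun p : ℂ × ℂ => Real.log (max 1 ‖p.1‖) :=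
    Continuous.log (by fun_prop) (fun p => (lt_max_of_lt_left one_pos).ne')
  have h2 : Continuous fun p : ℂ × ℂ => Real.log (max 1 ‖p.2‖) :=
    Continuous.log (by fun_prop) (fun p => (lt_max_of_lt_left one_pos).ne')
  fun_prop

lemma ev_cont (d : ℕ) (c : ℕ → ℕ → ℂ) : Continuous (ev d c) := by
  unfold ev
  fun_prop

lemma ev_bound {d : ℕ} {c : ℕ → ℕ → ℂ} (h : ∀ i ≤ d, ∀ j ≤ d, ‖c i j‖ ≤ 1) (p : ℂ × ℂ) :
    ‖ev d c p‖ ≤ Real.exp (d * Bf p) := by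
  have hz1 : 1 ≤ max 1 ‖p.1‖ := le_max_left _ _
  have hw1 : 1 ≤ max 1 ‖p.2‖ := le_max_left _ _
  have hexp : Real.exp (d * Bf p) = ((2 ^ d * 2 ^ d) : ℝ) * (max 1 ‖p.1‖ ^ d * max 1 ‖p.2‖ ^ d) := by
    rw [Real.exp_nat_mul]
    unfold Bf
    rw [Real.exp_add, Real.exp_add, Real.exp_log (by positivity), Real.exp_log (by positivity),
      two_mul, Real.exp_add, Real.exp_log (by norm_num)]
    simp only [mul_pow]; ring
  rw [hexp]
  have hd : ((d : ℝ) + 1) ≤ 2 ^ d := by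
    have : d + 1 ≤ 2 ^ d := Nat.lt_two_pow_self
    exact_mod_cast this
  have hterm : ∀ i ∈ Finset.range (d + 1), ∀ j ∈ Finset.range (d + 1),
      ‖c i j * p.1 ^ i * p.2 ^ j‖ ≤ max 1 ‖p.1‖ ^ d * max 1 ‖p.2‖ ^ d := by
    intro i hi j hj
    have hi' : i ≤ d := by simpa [Nat.lt_succ_iff] using hi
    have hj' : j ≤ d := by simpa [Nat.lt_succ_iff] using hj
    rw [norm_mul, norm_mul, norm_pow, norm_pow]
    have h1 : ‖p.1‖ ^ i ≤ max 1 ‖p.1‖ ^ d :=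
      (pow_le_pow_left₀ (norm_nonneg _) (le_max_right _ _) i).trans (pow_le_pow_right₀ hz1 hi')
    have h2 : ‖p.2‖ ^ j ≤ max 1 ‖p.2‖ ^ d :=
      (pow_le_pow_left₀ (norm_nonneg _) (le_max_right _ _) j).trans (pow_le_pow_right₀ hw1 hj')
    calc _ ≤ 1 * max 1 ‖p.1‖ ^ d * max 1 ‖p.2‖ ^ d := by
          gcongr
          exact h i hi' j hj'
      _ = _ := by ring
  calc ‖ev d c p‖ ≤ ∑ i ∈ Finset.range (d + 1), ∑ j ∈ Finset.range (d + 1),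
        (max 1 ‖p.1‖ ^ d * max 1 ‖p.2‖ ^ d) := by
        unfold ev
        refine (norm_sum_le _ _).trans (Finset.sum_le_sum fun i hi => ?_)
        exact (norm_sum_le _ _).trans (Finset.sum_le_sum fun j hj => hterm i hi j hj)
    _ = (((d : ℝ) + 1) * (d + 1)) * (max 1 ‖p.1‖ ^ d * max 1 ‖p.2‖ ^ d) := by
        simp; ring
    _ ≤ _ := by gcongr

structure TD where
  d : ℕ → ℕ
  D : ℕ → ℕ
  c : ℕ → ℕ → ℕ → ℂ
  hD : ∀ l, 1 ≤ D l
  hs : Summable (fun l => (d l : ℝ) / D l)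
  hc : ∀ l, Nrm (d l) (c l)

namespace TD
variable (t : TD)

def y (l : ℕ) (p : ℂ × ℂ) : ℝ :=
  ‖ev (t.d l) (t.c l) p‖ ^ (1 / (t.D l : ℝ)) * Real.exp (-((t.d l : ℝ) / t.D l) * Bf p)

def S : ℝ := ∑' l, (t.d l : ℝ) / t.D l

def XL (L : ℕ) (p : ℂ × ℂ) : ℝ := Real.exp (t.S * Bf p) * ∏ l ∈ Finset.range L, t.y l p

def X (p : ℂ × ℂ) : ℝ := ⨅ L, t.XL L p

lemma D_pos (l : ℕ) : (0 : ℝ) < t.D l := by exact_mod_cast t.hD l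

lemma y_nonneg (l : ℕ) (p : ℂ × ℂ) : 0 ≤ t.y l p := by unfold y; positivity

lemma y_le_one (l : ℕ) (p : ℂ × ℂ) : t.y l p ≤ 1 := by
  unfold y
  have h1 := ev_bound (t.hc l).1 p
  have h2 : ‖ev (t.d l) (t.c l) p‖ ^ (1 / (t.D l : ℝ)) ≤ Real.exp ((t.d l : ℝ) / t.D l * Bf p) := by
    refine (Real.rpow_le_rpow (norm_nonneg _) h1 (by positivity)).trans (le_of_eq ?_)
    rw [← Real.exp_mul]; congr 1; ring
  calc _ ≤ Real.exp ((t.d l : ℝ) / t.D l * Bf p) * Real.exp (-((t.d l : ℝ) / t.D l) * Bf p) := by gcongr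
    _ = 1 := by rw [← Real.exp_add]; simp

lemma y_cont (l : ℕ) : Continuous (t.y l) := by
  unfold y
  have h1 := ev_cont (t.d l) (t.c l)
  have h2 := Bf_cont
  apply Continuous.mul
  · exact (Real.continuous_rpow_const (by positivity)).comp h1.norm
  · fun_prop

lemma XL_cont (L : ℕ) : Continuous (t.XL L) := by
  unfold XL
  have h2 := Bf_cont
  have h3 := t.y_cont
  fun_prop

lemma XL_nonneg (L : ℕ) (p : ℂ × ℂ) : 0 ≤ t.XL L p :=
  mul_nonneg (Real.exp_pos _).le (Finset.prod_nonneg fun l _ => t.y_nonneg l p)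

lemma prod_anti (p : ℂ × ℂ) : Antitone fun L => ∏ l ∈ Finset.range L, t.y l p := by
  apply antitone_nat_of_succ_le
  intro L
  rw [Finset.prod_range_succ]
  exact mul_le_of_le_one_right (Finset.prod_nonneg fun l _ => t.y_nonneg l p) (t.y_le_one L p)

lemma XL_anti (p : ℂ × ℂ) : Antitone fun L => t.XL L p := by
  intro a b h
  exact mul_le_mul_of_nonneg_left (t.prod_anti p h) (Real.exp_pos _).le

lemma bdd (p : ℂ × ℂ) : BddBelow (Set.range fun L => t.XL L p) :=
  ⟨0, by rintro _ ⟨L, rfl⟩; exact t.XL_nonneg L p⟩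

lemma X_le (L : ℕ) (p : ℂ × ℂ) : t.X p ≤ t.XL L p := ciInf_le (t.bdd p) L

lemma X_nonneg (p : ℂ × ℂ) : 0 ≤ t.X p := le_ciInf fun L => t.XL_nonneg L p

lemma X_usc (v : ℝ) : IsOpen {p | t.X p < v} := by
  have : {p | t.X p < v} = ⋃ L, {p | t.XL L p < v} := by
    ext p
    simp only [Set.mem_setOf_eq, Set.mem_iUnion]
    constructor
    · intro h; exact exists_lt_of_ciInf_lt h
    · rintro ⟨L, h⟩; exact (t.X_le L p).trans_lt h
  rw [this]
  exact isOpen_iUnion fun L => isOpen_lt (t.XL_cont L) continuous_const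

lemma X_zero_of_prod (p : ℂ × ℂ) (h : ∀ ε > 0, ∃ L, ∏ l ∈ Finset.range L, t.y l p ≤ ε) : t.X p = 0 := by
  apply le_antisymm _ (t.X_nonneg p)
  apply le_of_forall_pos_le_add
  intro ε hε
  obtain ⟨L, hL⟩ := h (ε * Real.exp (-(t.S * Bf p))) (by positivity)
  refine (t.X_le L p).trans ?_
  unfold XL
  calc _ ≤ Real.exp (t.S * Bf p) * (ε * Real.exp (-(t.S * Bf p))) := by gcongr
    _ = ε * (Real.exp (t.S * Bf p) * Real.exp (-(t.S * Bf p))) := by ring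
    _ = _ := by rw [← Real.exp_add]; simp

lemma prod_of_X_zero (p : ℂ × ℂ) (h : t.X p = 0) (ε : ℝ) (hε : 0 < ε) :
    ∃ L, ∏ l ∈ Finset.range L, t.y l p ≤ ε := by
  have h1 : t.X p < ε * Real.exp (t.S * Bf p) := by rw [h]; positivity
  obtain ⟨L, hL⟩ := exists_lt_of_ciInf_lt h1
  refine ⟨L, ?_⟩
  unfold XL at hL
  rw [mul_comm] at hL
  exact (lt_of_mul_lt_mul_right hL (Real.exp_pos _).le).le

lemma X_zero_of_freq (p : ℂ × ℂ) (h : ∀ N, ∃ l ≥ N, t.y l p ≤ Real.exp (-1)) : t.X p = 0 := by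
  apply t.X_zero_of_prod
  have key : ∀ n : ℕ, ∃ L, ∏ l ∈ Finset.range L, t.y l p ≤ Real.exp (-1) ^ n := by
    intro n
    induction n with
    | zero => exact ⟨0, by simp⟩
    | succ n ih =>
      obtain ⟨L, hL⟩ := ih
      obtain ⟨l, hl, hy⟩ := h L
      refine ⟨l + 1, ?_⟩
      rw [Finset.prod_range_succ, pow_succ]
      have := t.prod_anti p hl
      exact mul_le_mul (this.trans hL) hy (t.y_nonneg l p) (by positivity)
  intro ε hε
  obtain ⟨n, hn⟩ := exists_pow_lt_of_lt_one hε (show Real.exp (-1) < 1 by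
    rw [Real.exp_lt_one_iff]; norm_num)
  obtain ⟨L, hL⟩ := key n
  exact ⟨L, hL.trans hn.le⟩

end TD

lemma elog_lt_coe {x a : ℝ} (hx : 0 ≤ x) : elog x < (a : EReal) ↔ x < Real.exp a := by
  unfold elog
  split_ifs with h
  · subst h; simp [Real.exp_pos, EReal.bot_lt_coe]
  · rw [EReal.coe_lt_coe_iff, Real.log_lt_iff_lt_exp (lt_of_le_of_ne hx (Ne.symm h))]

lemma elog_le_coe {x a : ℝ} (hx : 0 ≤ x) : elog x ≤ (a : EReal) ↔ x ≤ Real.exp a := by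
  unfold elog
  split_ifs with h
  · subst h; simp [(Real.exp_pos a).le]
  · rw [EReal.coe_le_coe_iff, Real.log_le_iff_le_exp (lt_of_le_of_ne hx (Ne.symm h))]

lemma elog_ne_top (x : ℝ) : elog x ≠ ⊤ := by
  unfold elog
  split_ifs <;> simp

lemma maxp (f : ℂ → ℂ) (hf : Differentiable ℂ f) (c : ℂ) (r : ℝ) (hr : 0 < r) (h : ℂ → ℝ)
    (hc : ContinuousOn h (closedBall c r)) (F : ℂ → ℂ) (hF : DifferentiableOn ℂ F (ball c r))
    (hFh : ∀ z ∈ ball c r, h z = (F z).re) (hs : ∀ z ∈ sphere c r, ‖f z‖ ≤ Real.exp (h z)) :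
    ∀ z ∈ closedBall c r, ‖f z‖ ≤ Real.exp (h z) := by
  set φ : ℂ → ℝ := fun z => ‖f z‖ * Real.exp (-h z) with hφ
  have hφc : ContinuousOn φ (closedBall c r) := by
    apply ContinuousOn.mul hf.continuous.norm.continuousOn
    exact Real.continuous_exp.comp_continuousOn hc.neg
  obtain ⟨z0, hz0, hmax⟩ := (isCompact_closedBall c r).exists_isMaxOn ⟨c, by simp [hr.le]⟩ hφc
  have hsm : ∀ z ∈ sphere c r, φ z ≤ 1 := by
    intro z hz
    have := hs z hz
    calc φ z ≤ Real.exp (h z) * Real.exp (-h z) := by simp only [hφ]; gcongr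
      _ = 1 := by rw [← Real.exp_add]; simp
  suffices hφ1 : φ z0 ≤ 1 by
    intro z hz
    have h1 : φ z ≤ 1 := (hmax hz).trans hφ1
    have h2 : ‖f z‖ = φ z * Real.exp (h z) := by
      simp only [hφ]; rw [mul_assoc, ← Real.exp_add]; simp
    rw [h2]
    exact mul_le_of_le_one_left (Real.exp_pos _).le h1
  by_contra! hgt
  have hz0b : z0 ∈ ball c r := by
    rw [mem_ball]
    refine lt_of_le_of_ne hz0 fun he => ?_
    linarith [hsm z0 he]
  set g : ℂ → ℂ := fun z => f z * Complex.exp (-F z) with hg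
  have hgn : ∀ z ∈ ball c r, ‖g z‖ = φ z := by
    intro z hz
    simp only [hg, hφ, norm_mul, Complex.norm_exp, Complex.neg_re, hFh z hz]
  have hgd : DifferentiableOn ℂ g (ball c r) :=
    hf.differentiableOn.mul (hF.neg.cexp)
  have hgm : IsMaxOn (norm ∘ g) (ball c r) z0 := by
    intro z hz
    show ‖g z‖ ≤ ‖g z0‖
    rw [hgn z hz, hgn z0 hz0b]
    exact hmax (ball_subset_closedBall hz)
  have heq := Complex.norm_eqOn_of_isPreconnected_of_isMaxOn
    (convex_ball c r).isPreconnected isOpen_ball hgd hz0b hgm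
  have heq2 : Set.EqOn φ (fun _ => φ z0) (ball c r) := by
    intro z hz
    have := heq hz
    simp only [Function.comp, Function.const] at this
    rw [hgn z hz, hgn z0 hz0b] at this
    exact this
  have heq3 : Set.EqOn φ (fun _ => φ z0) (closedBall c r) :=
    heq2.of_subset_closure hφc continuousOn_const ball_subset_closedBall
      (by rw [closure_ball c hr.ne'])
  have hp : c + r ∈ sphere c r := by simp [abs_of_pos hr]
  have h1 := heq3 (sphere_subset_closedBall hp)
  have h2 := hsm _ hp
  simp only at h1
  linarith

lemma ev_line_diff (d : ℕ) (c : ℕ → ℕ → ℂ) (a v : ℂ × ℂ) :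
    Differentiable ℂ (fun w : ℂ => ev d c (a + w • v)) := by
  unfold ev
  simp only [Prod.fst_add, Prod.snd_add, Prod.smul_fst, Prod.smul_snd, smul_eq_mul]
  fun_prop

lemma TD.elogX_usc (t : TD) : UpperSemicontinuous (fun p => elog (t.X p)) := by
  intro p y hy
  induction y with
  | bot => exact absurd hy (by simp)
  | top => exact Eventually.of_forall fun q => lt_top_iff_ne_top.2 (elog_ne_top _)
  | coe y =>
    rw [elog_lt_coe (t.X_nonneg p)] at hy
    filter_upwards [(t.X_usc (Real.exp y)).mem_nhds hy] with q hq
    rw [elog_lt_coe (t.X_nonneg q)]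
    exact hq

lemma TD.psh (t : TD) : PshFn (fun p => elog (t.X p)) := by
  refine ⟨t.elogX_usc, fun p => elog_ne_top _, fun a v => ⟨?_, fun p => elog_ne_top _, ?_⟩⟩
  · exact t.elogX_usc.comp (by fun_prop : Continuous fun w : ℂ => a + w • v)
  intro c r hr h hc hF hs z hz
  obtain ⟨F, hFd, hFh⟩ := hF
  rw [elog_le_coe (t.X_nonneg _)]
  set ℓ : ℂ → ℂ × ℂ := fun w => a + w • v with hℓ
  have hℓc : Continuous ℓ := by fun_prop
  have hs' : ∀ z ∈ sphere c r, t.X (ℓ z) ≤ Real.exp (h z) := by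
    intro z hz
    exact (elog_le_coe (t.X_nonneg _)).1 (hs z hz)
  suffices hδ : ∀ δ > 0, t.X (ℓ z) ≤ Real.exp (h z) * Real.exp (2 * δ) by
    have hlim : Tendsto (fun δ : ℝ => Real.exp (h z) * Real.exp (2 * δ)) (nhdsWithin 0 (Set.Ioi 0))
        (nhds (Real.exp (h z) * Real.exp (2 * 0))) := by
      apply Tendsto.mono_left _ nhdsWithin_le_nhds
      apply Continuous.tendsto
      fun_prop
    simp only [mul_zero, Real.exp_zero, mul_one] at hlim
    exact ge_of_tendsto hlim (eventually_nhdsWithin_of_forall hδ)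
  intro δ hδ
  -- compactness
  have h1 : ∀ z ∈ sphere c r, ∃ L, t.XL L (ℓ z) < Real.exp (h z + δ) := by
    intro z hz
    apply exists_lt_of_ciInf_lt
    exact (hs' z hz).trans_lt (Real.exp_lt_exp.2 (by linarith))
  choose! Lf hLf using h1
  obtain ⟨T, hT, hcov⟩ := (isCompact_sphere c r).elim_nhdsWithin_subcover
    (fun x => {z | t.XL (Lf x) (ℓ z) < Real.exp (h z + δ)}) (by
      intro x hx
      have hc1 : ContinuousOn (fun z => Real.exp (h z + δ)) (sphere c r) :=
        Real.continuous_exp.comp_continuousOn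
          ((hc.mono sphere_subset_closedBall).add continuousOn_const)
      exact ((t.XL_cont (Lf x)).comp hℓc).continuousWithinAt.eventually_lt (hc1 x hx) (hLf x hx))
  obtain ⟨B₀, hB₀⟩ := (isCompact_closedBall c r).bddAbove_image ((Bf_cont.comp hℓc).continuousOn)
  have hB₀' : ∀ z ∈ closedBall c r, Bf (ℓ z) ≤ B₀ := fun z hz => hB₀ ⟨z, hz, rfl⟩
  have hB₀0 : 0 ≤ B₀ := (Bf_nonneg _).trans (hB₀' z hz)
  -- tail
  have htl : Tendsto (fun L => (t.S - ∑ l ∈ Finset.range L, (t.d l : ℝ) / t.D l) * B₀) atTop (nhds 0) := by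
    have := (t.hs.hasSum.tendsto_sum_nat.const_sub t.S).mul_const B₀
    simpa [TD.S] using this
  obtain ⟨L, hLT, hLδ⟩ := ((eventually_ge_atTop (T.sup Lf)).and (htl.eventually_lt_const hδ)).exists
  set tail := t.S - ∑ l ∈ Finset.range L, (t.d l : ℝ) / t.D l with htail
  have htail0 : 0 ≤ tail := by
    have := t.hs.sum_le_tsum (Finset.range L) (fun _ _ => by positivity)
    unfold TD.S at htail
    linarith
  have hXL : ∀ p, t.XL L p = (∏ l ∈ Finset.range L, ‖ev (t.d l) (t.c l) p‖ ^ (1 / (t.D l : ℝ)))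
      * Real.exp (tail * Bf p) := by
    intro p
    unfold TD.XL TD.y
    rw [Finset.prod_mul_distrib, ← Real.exp_sum, mul_left_comm, ← Real.exp_add]
    congr 2
    rw [htail, ← Finset.sum_mul, Finset.sum_neg_distrib]
    ring
  set Dp := ∏ l ∈ Finset.range L, t.D l with hDp
  have hDp1 : 1 ≤ Dp := Finset.one_le_prod' fun l _ => t.hD l
  have hdvd : ∀ l ∈ Finset.range L, t.D l * (Dp / t.D l) = Dp := fun l hl =>
    Nat.mul_div_cancel' (Finset.dvd_prod_of_mem t.D hl)
  set f : ℂ → ℂ := fun w => ∏ l ∈ Finset.range L, ev (t.d l) (t.c l) (ℓ w) ^ (Dp / t.D l) with hf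
  have hfd : Differentiable ℂ f := by
    apply Differentiable.fun_finset_prod
    intro l _
    exact (ev_line_diff _ _ a v).pow _
  have hfZ : ∀ w, ‖f w‖ = (∏ l ∈ Finset.range L, ‖ev (t.d l) (t.c l) (ℓ w)‖ ^ (1 / (t.D l : ℝ))) ^ Dp := by
    intro w
    simp only [hf]
    rw [norm_prod, ← Finset.prod_pow]
    apply Finset.prod_congr rfl
    intro l hl
    rw [norm_pow]
    conv_rhs => rw [← hdvd l hl, pow_mul]
    congr 1
    rw [← Real.rpow_natCast, ← Real.rpow_mul (norm_nonneg _), one_div,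
      inv_mul_cancel₀ (t.D_pos l).ne', Real.rpow_one]
  have hZ0 : ∀ w, 0 ≤ (∏ l ∈ Finset.range L, ‖ev (t.d l) (t.c l) (ℓ w)‖ ^ (1 / (t.D l : ℝ))) :=
    fun w => Finset.prod_nonneg fun l _ => by positivity
  have hmp := maxp f hfd c r hr (fun z => Dp * (h z + δ))
    (continuousOn_const.mul (hc.add continuousOn_const)) (fun z => Dp * (F z + δ))
    ((hFd.add (differentiableOn_const _)).const_mul _) (by
      intro z hz
      rw [hFh z hz]
      simp) (by
      intro z hz
      rw [hfZ, Real.exp_nat_mul]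
      apply pow_le_pow_left₀ (hZ0 z)
      obtain ⟨x, hxT, hx⟩ := Set.mem_iUnion₂.1 (hcov hz)
      have h3 : t.XL L (ℓ z) ≤ t.XL (Lf x) (ℓ z) := t.XL_anti (ℓ z) ((Finset.le_sup hxT).trans hLT)
      have h4 : t.XL L (ℓ z) ≤ Real.exp (h z + δ) := h3.trans (le_of_lt hx)
      rw [hXL] at h4
      refine le_trans ?_ h4
      apply le_mul_of_one_le_right (hZ0 z)
      rw [Real.one_le_exp_iff]
      exact mul_nonneg htail0 (Bf_nonneg _))
  have h5 := hmp z hz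
  rw [hfZ, Real.exp_nat_mul] at h5
  have h6 := le_of_pow_le_pow_left₀ (by omega) (Real.exp_pos _).le h5
  refine (t.X_le L _).trans ?_
  rw [hXL]
  calc _ ≤ Real.exp (h z + δ) * Real.exp δ := by
        gcongr
        exact (mul_le_mul_of_nonneg_left (hB₀' z hz) htail0).trans hLδ.le
    _ = _ := by rw [← Real.exp_add, ← Real.exp_add]; congr 1; ring


lemma generic_point (g : ℕ → Polynomial ℂ) (d : ℕ → ℕ) (D : ℕ → ℕ) (lg : ℕ → ℝ)
    (hD : ∀ l, 1 ≤ D l)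
    (hdeg : ∀ l, (g l).natDegree ≤ d l) (hco : ∀ l i, ‖(g l).coeff i‖ ≤ 2 ^ d l)
    (hlow : ∀ l, ∃ i, Real.exp (-lg l) ≤ ‖(g l).coeff i‖)
    (hs : Summable fun l => (d l : ℝ) / D l) (hs2 : Summable fun l => lg l / D l) :
    ∃ z : ℂ, ‖z‖ = 1 ∧ (∀ l, (g l).eval z ≠ 0) ∧
      Summable fun l => |Real.log ‖(g l).eval z‖| / D l := by
  have hg0 : ∀ l, g l ≠ 0 := by
    intro l h0
    obtain ⟨i, hi⟩ := hlow l
    rw [h0] at hi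
    simp at hi
    exact absurd hi (not_le.2 (Real.exp_pos _))
  have hDp : ∀ l, (0 : ℝ) < D l := fun l => by exact_mod_cast hD l
  have hup : ∀ l (z : ℂ), ‖z‖ = 1 → ‖(g l).eval z‖ ≤ 4 ^ d l := by
    intro l z hz
    rw [Polynomial.eval_eq_sum_range' (Nat.lt_succ_of_le (hdeg l))]
    calc _ ≤ ∑ i ∈ Finset.range (d l + 1), (2 : ℝ) ^ d l := by
          refine (norm_sum_le _ _).trans (Finset.sum_le_sum fun i _ => ?_)
          rw [norm_mul, norm_pow, hz, one_pow, mul_one]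
          exact hco l i
      _ = ((d l : ℝ) + 1) * 2 ^ d l := by simp
      _ ≤ 2 ^ d l * 2 ^ d l := by
          gcongr
          have : d l + 1 ≤ 2 ^ d l := Nat.lt_two_pow_self
          exact_mod_cast this
      _ = 4 ^ d l := by rw [← mul_pow]; norm_num
  set G : ℕ → ℝ → ℝ := fun l θ => (d l * Real.log 4 - Real.log ‖(g l).eval (circleMap 0 1 θ)‖) / D l
    with hG
  have hlog4 : 0 ≤ Real.log 4 := Real.log_nonneg (by norm_num)
  have hGnn : ∀ l θ, 0 ≤ G l θ := by
    intro l θ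
    apply div_nonneg _ (hDp l).le
    have h1 := hup l (circleMap 0 1 θ) (by simp)
    rcases (norm_nonneg ((g l).eval (circleMap 0 1 θ))).eq_or_lt with h | h
    · rw [← h]; simp; positivity
    · have := Real.log_le_log h h1
      rw [Real.log_pow] at this
      linarith
  set μ := MeasureTheory.volume.restrict (Set.Ioc (0 : ℝ) (2 * Real.pi)) with hμ
  have h2pi : (0 : ℝ) ≤ 2 * Real.pi := by positivity
  have hli : ∀ l, MeasureTheory.Integrable (fun θ => Real.log ‖(g l).eval (circleMap 0 1 θ)‖) μ := by
    intro l
    have := Polynomial.intervalIntegrable_mahlerMeasure (g l)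
    rwa [intervalIntegrable_iff_integrableOn_Ioc_of_le h2pi] at this
  have hGi : ∀ l, MeasureTheory.Integrable (G l) μ := by
    intro l
    exact ((MeasureTheory.integrable_const _).sub (hli l)).div_const _
  have hvol : μ.real Set.univ = 2 * Real.pi := by
    rw [hμ]; simp [h2pi]
  have hGint : ∀ l, ∫ θ, G l θ ∂μ ≤ 2 * Real.pi * ((d l : ℝ) / D l * (Real.log 4 + Real.log 2) + lg l / D l) := by
    intro l
    have h1 : ∫ θ, G l θ ∂μ = (2 * Real.pi * (d l * Real.log 4) - ∫ θ, Real.log ‖(g l).eval (circleMap 0 1 θ)‖ ∂μ) / D l := by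
      simp only [hG]
      rw [MeasureTheory.integral_div, MeasureTheory.integral_sub (MeasureTheory.integrable_const _) (hli l),
        MeasureTheory.integral_const, hvol, smul_eq_mul]
    have h2 : ∫ θ, Real.log ‖(g l).eval (circleMap 0 1 θ)‖ ∂μ = 2 * Real.pi * Real.log (g l).mahlerMeasure := by
      rw [Polynomial.mahlerMeasure_def_of_ne_zero (hg0 l), Real.log_exp,
        intervalIntegral.integral_of_le h2pi]
      field_simp
      rfl
    have h3 : -lg l - d l * Real.log 2 ≤ Real.log (g l).mahlerMeasure := by
      obtain ⟨i, hi⟩ := hlow l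
      have h4 := hi.trans (Polynomial.norm_coeff_le_choose_mul_mahlerMeasure i (g l))
      have hM := Polynomial.mahlerMeasure_pos_of_ne_zero (hg0 l)
      have h5 : (((g l).natDegree.choose i : ℕ) : ℝ) ≤ 2 ^ d l := by
        have : (g l).natDegree.choose i ≤ 2 ^ d l :=
          (Nat.choose_le_two_pow _ _).trans (Nat.pow_le_pow_right (by norm_num) (hdeg l))
        exact_mod_cast this
      have h6 : Real.exp (-lg l) ≤ 2 ^ d l * (g l).mahlerMeasure :=
        h4.trans (mul_le_mul_of_nonneg_right h5 hM.le)
      have h7 := Real.log_le_log (Real.exp_pos _) h6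
      rw [Real.log_exp, Real.log_mul (by positivity) hM.ne', Real.log_pow] at h7
      linarith
    rw [h1, h2, div_le_iff₀ (hDp l)]
    have h4 : 2 * Real.pi * ((d l : ℝ) / D l * (Real.log 4 + Real.log 2) + lg l / D l) * D l
        = 2 * Real.pi * (d l * (Real.log 4 + Real.log 2) + lg l) := by
      have := (hDp l).ne'
      field_simp
    rw [h4]
    have h5 : 2 * Real.pi * (-lg l - d l * Real.log 2) ≤ 2 * Real.pi * Real.log (g l).mahlerMeasure :=
      mul_le_mul_of_nonneg_left h3 h2pi
    linarith
  have hfin : ∑' l, ∫⁻ θ, ENNReal.ofReal (G l θ) ∂μ ≠ ⊤ := by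
    have h1 : ∀ l, ∫⁻ θ, ENNReal.ofReal (G l θ) ∂μ = ENNReal.ofReal (∫ θ, G l θ ∂μ) := fun l =>
      (MeasureTheory.ofReal_integral_eq_lintegral_ofReal (hGi l) (Eventually.of_forall (hGnn l))).symm
    simp only [h1]
    have hsum : Summable fun l => ∫ θ, G l θ ∂μ :=
      Summable.of_nonneg_of_le (fun l => MeasureTheory.integral_nonneg (hGnn l)) hGint
        (((hs.mul_right _).add hs2).mul_left _)
    exact hsum.tsum_ofReal_lt_top.ne
  have hmeas : ∀ l, AEMeasurable (fun θ => ENNReal.ofReal (G l θ)) μ := fun l =>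
    (hGi l).aestronglyMeasurable.aemeasurable.ennreal_ofReal
  rw [← MeasureTheory.lintegral_tsum hmeas] at hfin
  have hae := MeasureTheory.ae_lt_top' (AEMeasurable.ennreal_tsum hmeas) hfin
  have hroots : ∀ l, ∀ᵐ θ ∂μ, (g l).eval (circleMap 0 1 θ) ≠ 0 := by
    intro l
    have hc : ((g l).rootSet ℂ).Countable := (Polynomial.rootSet_finite (g l) ℂ).countable
    filter_upwards [(hc.preimage_circleMap 0 one_ne_zero).ae_notMem μ] with θ hθ h0
    apply hθ
    rw [Set.mem_preimage, Polynomial.mem_rootSet]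
    exact ⟨hg0 l, by simpa using h0⟩
  have hne : (MeasureTheory.ae μ).NeBot := by
    rw [MeasureTheory.ae_neBot]
    intro h
    rw [h] at hvol
    simp at hvol
  obtain ⟨θ, h1, h2⟩ := (hae.and (MeasureTheory.ae_all_iff.2 hroots)).exists
  refine ⟨circleMap 0 1 θ, by simp, h2, ?_⟩
  have hsG : Summable fun l => G l θ := by
    have := ENNReal.summable_toReal h1.ne
    refine this.congr fun l => ?_
    rw [ENNReal.toReal_ofReal (hGnn l θ)]
  refine Summable.of_nonneg_of_le (fun l => by positivity) (fun l => ?_)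
    (hsG.add ((hs.mul_right (2 * Real.log 4))))
  have hGl := hGnn l θ
  rw [div_le_iff₀ (hDp l)]
  have h3 : (G l θ + (d l : ℝ) / D l * (2 * Real.log 4)) * D l
      = (d l * Real.log 4 - Real.log ‖(g l).eval (circleMap 0 1 θ)‖) + 2 * (d l * Real.log 4) := by
    simp only [hG]
    have := (hDp l).ne'
    field_simp
  rw [h3]
  have h4 : 0 ≤ (d l * Real.log 4 - Real.log ‖(g l).eval (circleMap 0 1 θ)‖) := by
    have := mul_nonneg hGl (hDp l).le
    simp only [hG] at this
    rwa [div_mul_cancel₀ _ (hDp l).ne'] at this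
  have h5 : (0 : ℝ) ≤ d l * Real.log 4 := by positivity
  rw [abs_le]
  constructor <;> linarith

lemma TD.nonzero (t : TD) : ∃ p, t.X p ≠ 0 := by
  choose hle i hi j hj hij using t.hc
  -- columns
  set g : ℕ → Polynomial ℂ := fun l => ∑ a ∈ Finset.range (t.d l + 1), Polynomial.C (t.c l a (j l)) * Polynomial.X ^ a with hg
  have hgc : ∀ l a, (g l).coeff a = if a ∈ Finset.range (t.d l + 1) then t.c l a (j l) else 0 := by
    intro l a
    simp only [hg, Polynomial.finset_sum_coeff, Polynomial.coeff_C_mul, Polynomial.coeff_X_pow]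
    simp
  have hd2 : ∀ l, ((t.d l : ℝ) + 1) ≤ 2 ^ t.d l := by
    intro l
    have : t.d l + 1 ≤ 2 ^ t.d l := Nat.lt_two_pow_self
    exact_mod_cast this
  obtain ⟨z, hz, hz0, hzs⟩ := generic_point g t.d t.D (fun _ => 0) t.hD (by
      intro l
      apply Polynomial.natDegree_sum_le_of_forall_le
      intro a ha
      exact (Polynomial.natDegree_C_mul_X_pow_le _ _).trans (by simpa [Nat.lt_succ_iff] using ha)) (by
      intro l a
      rw [hgc]
      split_ifs with h
      · exact (hle l a (by simpa [Nat.lt_succ_iff] using h) _ (hj l)).trans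
          (one_le_pow₀ (by norm_num))
      · simp) (by
      intro l
      refine ⟨i l, ?_⟩
      rw [hgc, if_pos (by simpa [Nat.lt_succ_iff] using hi l), hij]
      simp) t.hs (by simpa using summable_zero)
  have hgz : ∀ l, (g l).eval z = ∑ a ∈ Finset.range (t.d l + 1), t.c l a (j l) * z ^ a := by
    intro l; simp [hg, Polynomial.eval_finset_sum]
  set k : ℕ → Polynomial ℂ := fun l => ∑ b ∈ Finset.range (t.d l + 1),
    Polynomial.C (∑ a ∈ Finset.range (t.d l + 1), t.c l a b * z ^ a) * Polynomial.X ^ b with hk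
  have hkc : ∀ l b, (k l).coeff b = if b ∈ Finset.range (t.d l + 1) then
      ∑ a ∈ Finset.range (t.d l + 1), t.c l a b * z ^ a else 0 := by
    intro l b
    simp only [hk, Polynomial.finset_sum_coeff, Polynomial.coeff_C_mul, Polynomial.coeff_X_pow]
    simp
  obtain ⟨w, hw, hw0, hws⟩ := generic_point k t.d t.D (fun l => |Real.log ‖(g l).eval z‖|) t.hD (by
      intro l
      apply Polynomial.natDegree_sum_le_of_forall_le
      intro a ha
      exact (Polynomial.natDegree_C_mul_X_pow_le _ _).trans (by simpa [Nat.lt_succ_iff] using ha)) (by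
      intro l b
      rw [hkc]
      split_ifs with h
      · refine le_trans ?_ (hd2 l)
        calc _ ≤ ∑ a ∈ Finset.range (t.d l + 1), (1 : ℝ) := by
              refine (norm_sum_le _ _).trans (Finset.sum_le_sum fun a ha => ?_)
              rw [norm_mul, norm_pow, hz, one_pow, mul_one]
              exact hle l a (by simpa [Nat.lt_succ_iff] using ha) b (by simpa [Nat.lt_succ_iff] using h)
          _ = _ := by simp
      · simp) (by
      intro l
      refine ⟨j l, ?_⟩
      rw [hkc, if_pos (by simpa [Nat.lt_succ_iff] using hj l), ← hgz]
      have h1 : 0 < ‖(g l).eval z‖ := norm_pos_iff.2 (hz0 l)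
      conv_rhs => rw [← Real.exp_log h1]
      apply Real.exp_le_exp.2
      have := neg_abs_le (Real.log ‖(g l).eval z‖)
      linarith) t.hs hzs
  refine ⟨(z, w), ?_⟩
  have hev : ∀ l, ev (t.d l) (t.c l) (z, w) = (k l).eval w := by
    intro l
    simp only [ev, hk, Polynomial.eval_finset_sum, Polynomial.eval_mul, Polynomial.eval_C,
      Polynomial.eval_pow, Polynomial.eval_X]
    rw [Finset.sum_comm]
    apply Finset.sum_congr rfl
    intro b _
    rw [Finset.sum_mul]
  set Sg := ∑' l, |Real.log ‖(k l).eval w‖| / t.D l with hSg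
  have hlow : Real.exp (-Sg) ≤ t.X (z, w) := by
    apply le_ciInf
    intro L
    have h1 : t.XL L (z, w) = Real.exp ((t.S - ∑ l ∈ Finset.range L, (t.d l : ℝ) / t.D l) * Bf (z, w)
        + ∑ l ∈ Finset.range L, Real.log ‖(k l).eval w‖ / t.D l) := by
      unfold TD.XL
      have : ∀ l, t.y l (z, w) = Real.exp (-((t.d l : ℝ) / t.D l) * Bf (z, w) + Real.log ‖(k l).eval w‖ / t.D l) := by
        intro l
        unfold TD.y
        rw [hev, Real.exp_add, mul_comm]
        congr 1
        rw [Real.rpow_def_of_pos (norm_pos_iff.2 (hw0 l))]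
        congr 1; ring
      simp only [this]
      rw [← Real.exp_sum, ← Real.exp_add, Finset.sum_add_distrib, ← Finset.sum_mul,
        Finset.sum_neg_distrib]
      congr 1; ring
    rw [h1]
    apply Real.exp_le_exp.2
    have h2 : 0 ≤ (t.S - ∑ l ∈ Finset.range L, (t.d l : ℝ) / t.D l) * Bf (z, w) := by
      apply mul_nonneg _ (Bf_nonneg _)
      have := t.hs.sum_le_tsum (Finset.range L) (fun _ _ => by positivity)
      unfold TD.S
      linarith
    have h3 : ∑ l ∈ Finset.range L, |Real.log ‖(k l).eval w‖| / t.D l ≤ Sg :=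
      hws.sum_le_tsum (Finset.range L) (fun _ _ => by positivity)
    have h4 : -(∑ l ∈ Finset.range L, |Real.log ‖(k l).eval w‖| / t.D l)
        ≤ ∑ l ∈ Finset.range L, Real.log ‖(k l).eval w‖ / t.D l := by
      rw [← Finset.sum_neg_distrib]
      apply Finset.sum_le_sum
      intro l _
      rw [← neg_div]
      have := t.D_pos l
      gcongr
      exact neg_abs_le _
    linarith
  exact (lt_of_lt_of_le (Real.exp_pos _) hlow).ne'

def Thin (S : Set (ℂ × ℂ)) : Prop := ∃ t : TD, ∀ p ∈ S, t.X p = 0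

lemma Thin.pluripolar {S : Set (ℂ × ℂ)} (h : Thin S) : Pluripolar S := by
  obtain ⟨t, ht⟩ := h
  refine ⟨fun p => elog (t.X p), t.psh, ?_, ?_⟩
  · obtain ⟨p, hp⟩ := t.nonzero
    exact ⟨p, by simp [elog, hp]⟩
  · intro p hp
    simp [elog, ht p hp]

def Zset (K : Set (ℂ × ℂ)) : Prop :=
  ∀ C : ℝ, ∃ d : ℕ, 1 ≤ d ∧ ∃ c, Nrm d c ∧ ∀ p ∈ K, ‖ev d c p‖ ≤ Real.exp (-C * d)

lemma thin_of_Zset (K : ℕ → Set (ℂ × ℂ)) (hK : ∀ i, Zset (K i)) : Thin (⋃ i, K i) := by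
  have h : ∀ k : ℕ, ∃ d : ℕ, 1 ≤ d ∧ ∃ c, Nrm d c ∧
      ∀ p ∈ K (Nat.unpair k).1, ‖ev d c p‖ ≤ Real.exp (-(2 ^ k : ℝ) * d) := fun k => hK _ _
  choose d hd c hc hp using h
  refine ⟨⟨d, fun k => d k * 2 ^ k, c, fun k => Nat.mul_pos (hd k) (by positivity), ?_, hc⟩, ?_⟩
  · refine (summable_geometric_two).congr fun k => ?_
    have : (d k : ℝ) ≠ 0 := by have := hd k; positivity
    push_cast
    rw [one_div, inv_pow]
    field_simp
  · intro p hpK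
    obtain ⟨i, hi⟩ := Set.mem_iUnion.1 hpK
    apply TD.X_zero_of_freq
    intro N
    refine ⟨Nat.pair i N, Nat.right_le_pair i N, ?_⟩
    set k := Nat.pair i N with hk
    have h1 := hp k p (by rw [hk, Nat.unpair_pair]; exact hi)
    have hdk : (0 : ℝ) < d k := by exact_mod_cast hd k
    have h2 : ‖ev (d k) (c k) p‖ ^ (1 / ((d k * 2 ^ k : ℕ) : ℝ)) ≤ Real.exp (-1) := by
      refine (Real.rpow_le_rpow (norm_nonneg _) h1 (by positivity)).trans (le_of_eq ?_)
      rw [← Real.exp_mul]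
      congr 1
      push_cast
      field_simp
    show ‖ev (d k) (c k) p‖ ^ (1 / ((d k * 2 ^ k : ℕ) : ℝ)) * Real.exp (-((d k : ℝ) / ((d k * 2 ^ k : ℕ) : ℝ)) * Bf p) ≤ _
    calc _ ≤ Real.exp (-1) * 1 := by
          gcongr
          rw [Real.exp_le_one_iff, neg_mul]
          have : 0 ≤ (d k : ℝ) / ((d k * 2 ^ k : ℕ) : ℝ) * Bf p := mul_nonneg (by positivity) (Bf_nonneg p)
          linarith
      _ = _ := mul_one _

lemma Thin.mono {S T : Set (ℂ × ℂ)} (h : Thin T) (hS : S ⊆ T) : Thin S := by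
  obtain ⟨t, ht⟩ := h
  exact ⟨t, fun p hp => ht p (hS hp)⟩

def il {α : Type*} (a b : ℕ → α) (l : ℕ) : α := if l % 2 = 0 then a (l / 2) else b (l / 2)

lemma il_even {α : Type*} (a b : ℕ → α) (l : ℕ) : il a b (2 * l) = a l := by simp [il]
lemma il_odd {α : Type*} (a b : ℕ → α) (l : ℕ) : il a b (2 * l + 1) = b l := by
  have h1 : (2 * l + 1) % 2 = 1 := by omega
  have h2 : (2 * l + 1) / 2 = l := by omega
  simp [il, h1, h2]

lemma Thin.union {S T : Set (ℂ × ℂ)} (hS : Thin S) (hT : Thin T) : Thin (S ∪ T) := by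
  obtain ⟨a, ha⟩ := hS
  obtain ⟨b, hb⟩ := hT
  have key : ∀ P : ℕ → Prop, (∀ l, P (2 * l)) → (∀ l, P (2 * l + 1)) → ∀ l, P l := by
    intro P h1 h2 l
    rcases Nat.even_or_odd' l with ⟨k, rfl | rfl⟩
    · exact h1 k
    · exact h2 k
  let t : TD := ⟨il a.d b.d, il a.D b.D, il a.c b.c,
    key _ (fun l => by rw [il_even]; exact a.hD l) (fun l => by rw [il_odd]; exact b.hD l),
    (HasSum.even_add_odd (f := fun l => ((il a.d b.d l : ℕ) : ℝ) / (il a.D b.D l : ℕ))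
      (by simp only [il_even]; exact a.hs.hasSum) (by simp only [il_odd]; exact b.hs.hasSum)).summable,
    key _ (fun l => by rw [il_even, il_even]; exact a.hc l) (fun l => by rw [il_odd, il_odd]; exact b.hc l)⟩
  have hy0 : ∀ l p, t.y (2 * l) p = a.y l p := by
    intro l p; simp only [TD.y, t, il_even]
  have hy1 : ∀ l p, t.y (2 * l + 1) p = b.y l p := by
    intro l p; simp only [TD.y, t, il_odd]
  have hprod : ∀ L p, ∏ l ∈ Finset.range (2 * L), t.y l p =
      (∏ l ∈ Finset.range L, a.y l p) * ∏ l ∈ Finset.range L, b.y l p := by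
    intro L p
    induction L with
    | zero => simp
    | succ L ih =>
      rw [show 2 * (L + 1) = 2 * L + 1 + 1 by ring, Finset.prod_range_succ, Finset.prod_range_succ, ih,
        hy0, hy1, Finset.prod_range_succ, Finset.prod_range_succ]
      ring
  refine ⟨t, ?_⟩
  rintro p (hp | hp)
  · apply t.X_zero_of_prod
    intro ε hε
    obtain ⟨L, hL⟩ := a.prod_of_X_zero p (ha p hp) ε hε
    refine ⟨2 * L, ?_⟩
    rw [hprod]
    exact (mul_le_of_le_one_right (Finset.prod_nonneg fun l _ => a.y_nonneg l p)
      (Finset.prod_le_one (fun l _ => b.y_nonneg l p) (fun l _ => b.y_le_one l p))).trans hL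
  · apply t.X_zero_of_prod
    intro ε hε
    obtain ⟨L, hL⟩ := b.prod_of_X_zero p (hb p hp) ε hε
    refine ⟨2 * L, ?_⟩
    rw [hprod]
    exact (mul_le_of_le_one_left (Finset.prod_nonneg fun l _ => b.y_nonneg l p)
      (Finset.prod_le_one (fun l _ => a.y_nonneg l p) (fun l _ => a.y_le_one l p))).trans hL

/-- monic polynomials small on `K` make `K × ℂ` a `Zset`. -/
lemma Zset_of_monic (K : Set ℂ) (h : ∀ C : ℝ, ∃ T : Polynomial ℂ, T.Monic ∧ 1 ≤ T.natDegree ∧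
      ∀ z ∈ K, ‖T.eval z‖ ≤ Real.exp (-C * T.natDegree)) : Zset {p | p.1 ∈ K} := by
  intro C
  obtain ⟨T, hT, hd, hK⟩ := h C
  set d := T.natDegree with hdd
  obtain ⟨i0, hi0, hmax⟩ := (Finset.range (d + 1)).exists_max_image (fun i => ‖T.coeff i‖) ⟨0, by simp⟩
  set m := ‖T.coeff i0‖ with hm
  have hm1 : 1 ≤ m := by
    have := hmax d (by simp)
    have h2 : T.coeff d = 1 := hT
    rwa [h2, norm_one] at this
  have hm0 : (m : ℂ) ≠ 0 := by
    exact_mod_cast (by linarith : m ≠ 0)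
  refine ⟨d, hd, fun i j => if j = 0 then T.coeff i / m else 0, ⟨?_, ?_⟩, ?_⟩
  · intro i hi j _
    beta_reduce
    split_ifs
    · rw [norm_div, Complex.norm_real, Real.norm_of_nonneg (by linarith)]
      exact div_le_one_of_le₀ (hmax i (by simpa [Nat.lt_succ_iff] using hi)) (by linarith)
    · simp
  · refine ⟨i0, by simpa [Nat.lt_succ_iff] using hi0, 0, by omega, ?_⟩
    beta_reduce
    rw [if_pos rfl, norm_div, Complex.norm_real, Real.norm_of_nonneg (by linarith)]
    exact div_self (by linarith)
  · intro p hp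
    have : ev d (fun i j => if j = 0 then T.coeff i / m else 0) p = T.eval p.1 / m := by
      unfold ev
      rw [Polynomial.eval_eq_sum_range, Finset.sum_div]
      apply Finset.sum_congr rfl
      intro i _
      rw [Finset.sum_eq_single 0]
      · simp; ring
      · intro j _ hj; simp [hj]
      · simp
    rw [this, norm_div, Complex.norm_real, Real.norm_of_nonneg (by linarith)]
    refine (div_le_self (norm_nonneg _) hm1).trans (hK p.1 hp)


section Fek
variable {X ι : Type} [Fintype ι] [DecidableEq ι]

def Em (e : ι → X → ℂ) (x : ι → X) : Matrix ι ι ℂ := Matrix.of fun a b => e a (x b)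

def lag (e : ι → X → ℂ) (x : ι → X) (b : ι) (p : X) : ℂ := ∑ a, (Em e x)⁻¹ b a * e a p

lemma lag_sum (e : ι → X → ℂ) (x : ι → X) (hx : (Em e x).det ≠ 0) (c : ι → ℂ) (p : X) :
    ∑ b, (∑ a, c a * e a (x b)) * lag e x b p = ∑ a, c a * e a p := by
  have h1 : (Em e x) * (Em e x)⁻¹ = 1 := Matrix.mul_nonsing_inv _ (isUnit_iff_ne_zero.2 hx)
  have h2 : Matrix.vecMul c (Em e x) = fun b => ∑ a, c a * e a (x b) := by
    ext b; simp [Matrix.vecMul, dotProduct, Em]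
  have h3 : (fun b => lag e x b p) = (Em e x)⁻¹.mulVec (fun a => e a p) := by
    ext b; simp [Matrix.mulVec, dotProduct, lag]
  have h4 : ∑ b, (∑ a, c a * e a (x b)) * lag e x b p
      = (Matrix.vecMul c (Em e x)) ⬝ᵥ ((Em e x)⁻¹.mulVec (fun a => e a p)) := by
    rw [h2, ← h3]; simp [dotProduct]
  rw [h4, Matrix.dotProduct_mulVec, Matrix.vecMul_vecMul, h1, Matrix.vecMul_one]
  simp [dotProduct]

lemma lag_norm (e : ι → X → ℂ) (x : ι → X) (hx : (Em e x).det ≠ 0) (L : Set X)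
    (hxL : ∀ i, x i ∈ L)
    (hF : ∀ y : ι → X, (∀ i, y i ∈ L) → ‖(Em e y).det‖ ≤ ‖(Em e x).det‖) (b : ι) (p : X)
    (hp : p ∈ L) : ‖lag e x b p‖ ≤ 1 := by
  have h3 : (fun b => lag e x b p) = (Em e x)⁻¹.mulVec (fun a => e a p) := by
    ext b; simp [Matrix.mulVec, dotProduct, lag]
  have h4 : (Em e (Function.update x b p)) = (Em e x).updateCol b (fun a => e a p) := by
    ext i j
    simp only [Em, Matrix.of_apply, Matrix.updateCol_apply, Function.update_apply]
    split_ifs <;> rfl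
  have h5 : (Em e x).det * lag e x b p = (Em e (Function.update x b p)).det := by
    rw [h4, ← Matrix.cramer_apply, Matrix.cramer_eq_adjugate_mulVec]
    have : lag e x b p = ((Em e x)⁻¹.mulVec (fun a => e a p)) b := congrFun h3 b
    rw [this, Matrix.inv_def, Matrix.smul_mulVec, Pi.smul_apply, Ring.inverse_eq_inv', smul_eq_mul,
      ← mul_assoc, mul_inv_cancel₀ hx, one_mul]
  have h6 := hF (Function.update x b p) (by
    intro i
    by_cases h : i = b
    · subst h; simpa using hp
    · simpa [Function.update_of_ne h] using hxL i)
  rw [← h5, norm_mul] at h6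
  exact le_of_mul_le_mul_left (by simpa using h6) (norm_pos_iff.2 hx)

lemma det_factor (e : ι → X → ℂ) (x y : ι → X) (hx : (Em e x).det ≠ 0) :
    (Em e y).det = (Em e x).det * (Matrix.of fun b j => lag e x b (y j)).det := by
  have h1 : (Em e x) * (Em e x)⁻¹ = 1 := Matrix.mul_nonsing_inv _ (isUnit_iff_ne_zero.2 hx)
  have : (Matrix.of fun b j => lag e x b (y j)) = (Em e x)⁻¹ * Em e y := by
    ext b j; simp [lag, Matrix.mul_apply, Em]
  rw [this, ← Matrix.det_mul, ← mul_assoc, h1, one_mul]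

lemma det_le_rows (M : Matrix ι ι ℂ) (B : ι → ℝ) (hB : ∀ i j, ‖M i j‖ ≤ B i) :
    ‖M.det‖ ≤ (Fintype.card ι).factorial * ∏ i, B i := by
  rw [← Matrix.det_transpose, Matrix.det_apply]
  refine (norm_sum_le _ _).trans ?_
  have : ∀ σ ∈ (Finset.univ : Finset (Equiv.Perm ι)),
      ‖Equiv.Perm.sign σ • ∏ i, M.transpose (σ i) i‖ ≤ ∏ i, B i := by
    intro σ _
    have h0 : ‖Equiv.Perm.sign σ • ∏ i, M.transpose (σ i) i‖ = ‖∏ i, M.transpose (σ i) i‖ := by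
      rcases Int.units_eq_one_or (Equiv.Perm.sign σ) with h | h <;> rw [h] <;> simp
    rw [h0, norm_prod]
    exact Finset.prod_le_prod (fun i _ => norm_nonneg _) fun i _ => hB i _
  refine (Finset.sum_le_sum this).trans ?_
  rw [Finset.sum_const, Finset.card_univ, Fintype.card_perm, nsmul_eq_mul]

lemma exists_det_ne (e : ι → X → ℂ) (K : Set X)
    (h : ∀ c : ι → ℂ, (∀ p ∈ K, ∑ a, c a * e a p = 0) → c = 0) :
    ∃ x : ι → X, (∀ i, x i ∈ K) ∧ (Em e x).det ≠ 0 := by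
  classical
  set S : Set (ι → ℂ) := (fun p => fun a => e a p) '' K with hS
  have htop : Submodule.span ℂ S = ⊤ := by
    by_contra hne
    obtain ⟨f, hf0, hf⟩ := Submodule.exists_le_ker_of_lt_top _ (lt_top_iff_ne_top.2 hne)
    apply hf0
    have hfr : ∀ v, f v = ∑ a, f (fun j => if a = j then 1 else 0) * v a := by
      intro v
      rw [LinearMap.pi_apply_eq_sum_univ f v]
      exact Finset.sum_congr rfl fun a _ => by rw [smul_eq_mul, mul_comm]
    have := h (fun a => f (fun j => if a = j then 1 else 0)) (by
      intro p hp
      rw [← hfr (fun a => e a p)]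
      exact hf (Submodule.subset_span ⟨p, hp, rfl⟩))
    refine LinearMap.ext fun v => ?_
    rw [hfr v, LinearMap.zero_apply]
    exact Finset.sum_eq_zero fun a _ => by rw [show f _ = 0 from congrFun this a, zero_mul]
  obtain ⟨g, hg1, hg2, hg3⟩ := Submodule.exists_fun_fin_finrank_span_eq ℂ S
  have hcard : Module.finrank ℂ (Submodule.span ℂ S) = Fintype.card ι := by
    rw [htop]; simp
  let eq : ι ≃ Fin (Module.finrank ℂ (Submodule.span ℂ S)) :=
    Fintype.equivOfCardEq (by simp [hcard])
  have hmem : ∀ i, ∃ p ∈ K, (fun a => e a p) = g (eq i) := fun i => hg1 _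
  choose x hxK hx using hmem
  refine ⟨x, hxK, ?_⟩
  have hli : LinearIndependent ℂ (fun i => g (eq i)) := hg3.comp _ eq.injective
  have : IsUnit (Em e x) := by
    rw [← Matrix.linearIndependent_cols_iff_isUnit]
    have he : (Em e x).col = fun i => g (eq i) := by
      ext i a
      rw [← hx i]
      rfl
    rw [he]
    exact hli
  exact isUnit_iff_ne_zero.1 ((Matrix.isUnit_iff_isUnit_det _).1 this)

lemma fekete [TopologicalSpace X] (e : ι → X → ℂ) (he : ∀ a, Continuous (e a)) (L : Set X)
    (hL : IsCompact L) (hne : L.Nonempty) :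
    ∃ x : ι → X, (∀ i, x i ∈ L) ∧
      ∀ y : ι → X, (∀ i, y i ∈ L) → ‖(Em e y).det‖ ≤ ‖(Em e x).det‖ := by
  have hc : IsCompact (Set.univ.pi fun _ : ι => L) := isCompact_univ_pi fun _ => hL
  have hcont : Continuous fun x : ι → X => ‖(Em e x).det‖ := by
    apply Continuous.norm
    apply Continuous.matrix_det
    apply continuous_matrix
    intro i j
    exact (he i).comp (continuous_apply j)
  obtain ⟨p, hp⟩ := hne
  obtain ⟨x, hx, hm⟩ := hc.exists_isMaxOn ⟨fun _ => p, fun i _ => hp⟩ hcont.continuousOn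
  exact ⟨x, fun i => hx i trivial, fun y hy => hm (fun i _ => hy i)⟩

end Fek


section Fek
variable {X ι : Type} [Fintype ι] [DecidableEq ι]

lemma det_step {ι' : Type} [Fintype ι'] (e : ι → X → ℂ) (x : ι → X) (hx : (Em e x).det ≠ 0)
    (L L' : Set X) (hxL : ∀ i, x i ∈ L) (hLL : L' ⊆ L)
    (hF : ∀ y : ι → X, (∀ i, y i ∈ L) → ‖(Em e y).det‖ ≤ ‖(Em e x).det‖)
    (h : ι' → X → ℂ) (hspan : ∀ i, ∃ c : ι → ℂ, ∀ p, h i p = ∑ a, c a * e a p)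
    (hind : ∀ a : ι' → ℂ, (∀ p, ∑ i, a i * h i p = 0) → a = 0)
    (θ : ℝ) (hθ : 0 ≤ θ)
    (hsm : ∀ a : ι' → ℂ, (∀ p ∈ L, ‖∑ i, a i * h i p‖ ≤ 1) → ∀ p ∈ L', ‖∑ i, a i * h i p‖ ≤ θ)
    (x' : ι → X) (hx' : ∀ i, x' i ∈ L') :
    ‖(Em e x').det‖ ≤ (Fintype.card ι).factorial * (Fintype.card ι : ℝ) ^ (Fintype.card ι)
      * θ ^ (Fintype.card ι') * ‖(Em e x).det‖ := by
  classical
  have hinterp : ∀ i p, h i p = ∑ b, h i (x b) * lag e x b p := by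
    intro i p
    obtain ⟨c, hc⟩ := hspan i
    rw [hc p, ← lag_sum e x hx c p]
    simp [hc]
  set w : ι' → EuclideanSpace ℂ ι := fun i => WithLp.toLp 2 (fun b => h i (x b)) with hw
  have hwli : LinearIndependent ℂ w := by
    rw [Fintype.linearIndependent_iff]
    intro g hg
    have := hind g (fun p => by
      have h0 : ∀ b, ∑ i, g i * h i (x b) = 0 := by
        intro b
        have := congrArg (fun v : EuclideanSpace ℂ ι => v b) hg
        simpa [hw] using this
      calc ∑ i, g i * h i p = ∑ i, ∑ b, g i * h i (x b) * lag e x b p := by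
            refine Finset.sum_congr rfl fun i _ => ?_
            rw [hinterp i p, Finset.mul_sum]
            exact Finset.sum_congr rfl fun b _ => by ring
        _ = ∑ b, (∑ i, g i * h i (x b)) * lag e x b p := by
            rw [Finset.sum_comm]
            exact Finset.sum_congr rfl fun b _ => by rw [Finset.sum_mul]
        _ = 0 := by simp [h0])
    exact fun i => congrFun this i
  set W := Submodule.span ℂ (Set.range w) with hW
  have hm : Module.finrank ℂ W = Fintype.card ι' := finrank_span_eq_card hwli
  have hle : Module.finrank ℂ W ≤ Fintype.card ι := by
    have := Submodule.finrank_le W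
    rwa [finrank_euclideanSpace] at this
  let b0 := stdOrthonormalBasis ℂ W
  obtain ⟨emb⟩ : Nonempty (Fin (Module.finrank ℂ W) ↪ ι) :=
    Function.Embedding.nonempty_of_card_le (by simpa using hle)
  let v : ι → EuclideanSpace ℂ ι := Function.extend emb (fun j => (b0 j : EuclideanSpace ℂ ι)) 0
  have hv : ∀ j, v (emb j) = b0 j := fun j => emb.injective.extend_apply _ _ j
  have hort : Orthonormal ℂ ((Set.range emb).domRestrict v) := by
    have h1 : Orthonormal ℂ (W.subtypeₗᵢ ∘ b0) := b0.orthonormal.comp_linearIsometry W.subtypeₗᵢ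
    have h2 := h1.comp (Equiv.ofInjective emb emb.injective).symm
      (Equiv.injective _)
    convert h2 using 1
    ext1 ⟨i, j, hj⟩
    subst hj
    have : (Equiv.ofInjective emb emb.injective).symm ⟨emb j, ⟨j, rfl⟩⟩ = j := by
      rw [Equiv.symm_apply_eq]; rfl
    simp only [Function.comp, this]
    exact hv j
  obtain ⟨U, hU⟩ := hort.exists_orthonormalBasis_extension_of_card_eq (by simp)
  have hUn : ∀ i b, ‖U i b‖ ≤ 1 := by
    intro i b
    have := PiLp.norm_apply_le (U i) b
    rwa [U.orthonormal.1 i] at this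
  set H : Matrix ι ι ℂ := Matrix.of fun i j => ∑ b, U i b * lag e x b (x' j) with hH
  have hHf : H = (Matrix.of fun i b => U i b) * (Matrix.of fun b j => lag e x b (x' j)) := by
    ext i j; simp [hH, Matrix.mul_apply]
  have hUd : ‖(Matrix.of fun i b => U i b : Matrix ι ι ℂ).det‖ = 1 := by
    have := (EuclideanSpace.basisFun ι ℂ).det_to_matrix_orthonormalBasis U
    rw [← this, Module.Basis.det_apply, ← Matrix.det_transpose]
    congr 2
  have hbig : ∀ i, ∀ p ∈ L, ‖∑ b, U i b * lag e x b p‖ ≤ Fintype.card ι := by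
    intro i p hp
    refine (norm_sum_le _ _).trans ?_
    calc _ ≤ ∑ b : ι, (1 : ℝ) := by
          refine Finset.sum_le_sum fun b _ => ?_
          rw [norm_mul]
          exact mul_le_one₀ (hUn i b) (norm_nonneg _) (lag_norm e x hx L hxL hF b p hp)
      _ = _ := by simp
  have hsmall : ∀ j, ∀ p ∈ L', ‖∑ b, U (emb j) b * lag e x b p‖ ≤ Fintype.card ι * θ := by
    intro j
    have hmem : U (emb j) ∈ W := by
      rw [hU _ ⟨j, rfl⟩, hv j]; exact (b0 j).2
    obtain ⟨a, ha⟩ := (Submodule.mem_span_range_iff_exists_fun ℂ).1 hmem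
    have hb : ∀ b, U (emb j) b = ∑ i, a i * h i (x b) := by
      intro b
      rw [← ha]; simp [hw]
    have hfun : ∀ p, ∑ b, U (emb j) b * lag e x b p = ∑ i, a i * h i p := by
      intro p
      symm
      calc ∑ i, a i * h i p = ∑ i, ∑ b, a i * h i (x b) * lag e x b p := by
            refine Finset.sum_congr rfl fun i _ => ?_
            rw [hinterp i p, Finset.mul_sum]
            exact Finset.sum_congr rfl fun b _ => by ring
        _ = ∑ b, (∑ i, a i * h i (x b)) * lag e x b p := by
            rw [Finset.sum_comm]
            exact Finset.sum_congr rfl fun b _ => by rw [Finset.sum_mul]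
        _ = _ := by simp [hb]
    have hN : (0 : ℝ) < Fintype.card ι := by
      have : 0 < Fintype.card ι := Fintype.card_pos_iff.2 ⟨emb j⟩
      exact_mod_cast this
    have hsc : ∀ p, ∑ i, ((Fintype.card ι : ℂ)⁻¹ * a i) * h i p
        = (Fintype.card ι : ℂ)⁻¹ * ∑ i, a i * h i p := by
      intro p
      rw [Finset.mul_sum]
      exact Finset.sum_congr rfl fun i _ => by ring
    have h3 := hsm (fun i => (Fintype.card ι : ℂ)⁻¹ * a i) (by
      intro p hp
      rw [hsc, norm_mul, ← hfun p, norm_inv, Complex.norm_natCast, inv_mul_le_iff₀ hN, mul_one]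
      exact hbig _ p hp)
    intro p hp
    have h4 := h3 p hp
    rw [hsc, norm_mul, ← hfun p, norm_inv, Complex.norm_natCast, inv_mul_le_iff₀ hN] at h4
    exact h4
  have hdet : ‖H.det‖ = ‖(Matrix.of fun b j => lag e x b (x' j) : Matrix ι ι ℂ).det‖ := by
    rw [hHf, Matrix.det_mul, norm_mul, hUd, one_mul]
  have hrow := det_le_rows H (fun i => Fintype.card ι * if i ∈ Finset.univ.map emb then θ else 1) (by
    intro i j
    by_cases hi : i ∈ Finset.univ.map emb
    · rw [if_pos hi]
      obtain ⟨k, -, rfl⟩ := Finset.mem_map.1 hi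
      exact hsmall k _ (hx' j)
    · rw [if_neg hi, mul_one]
      exact hbig i _ (hLL (hx' j)))
  rw [Finset.prod_mul_distrib, Finset.prod_const, Finset.prod_ite_mem, Finset.univ_inter,
    Finset.prod_const, Finset.card_map, Finset.card_univ, Finset.card_univ, Fintype.card_fin,
    hm, hdet] at hrow
  rw [det_factor e x x' hx, norm_mul, mul_comm]
  refine mul_le_mul_of_nonneg_right ?_ (norm_nonneg _)
  linarith
end Fek


abbrev Ix (d : ℕ) : Type := Fin (d + 1) × Fin (d + 1)

def mon (d : ℕ) (a : Ix d) (p : ℂ × ℂ) : ℂ := p.1 ^ (a.1 : ℕ) * p.2 ^ (a.2 : ℕ)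

def VV (d : ℕ) : Submodule ℂ (ℂ × ℂ → ℂ) := Submodule.span ℂ (Set.range (mon d))

lemma mon_cont (d : ℕ) (a : Ix d) : Continuous (mon d a) := by
  unfold mon; fun_prop

lemma mem_VV {d : ℕ} {f : ℂ × ℂ → ℂ} :
    f ∈ VV d ↔ ∃ c : Ix d → ℂ, ∀ p, f p = ∑ a, c a * mon d a p := by
  unfold VV
  rw [Submodule.mem_span_range_iff_exists_fun]
  constructor
  · rintro ⟨c, hc⟩
    refine ⟨c, fun p => ?_⟩
    rw [← hc]; simp
  · rintro ⟨c, hc⟩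
    refine ⟨c, funext fun p => ?_⟩
    rw [hc]; simp

lemma mon_mem (d i j : ℕ) (hi : i ≤ d) (hj : j ≤ d) :
    (fun p : ℂ × ℂ => p.1 ^ i * p.2 ^ j) ∈ VV d :=
  Submodule.subset_span ⟨(⟨i, by omega⟩, ⟨j, by omega⟩), rfl⟩

lemma VV_mul {d e : ℕ} {f g : ℂ × ℂ → ℂ} (hf : f ∈ VV d) (hg : g ∈ VV e) :
    f * g ∈ VV (d + e) := by
  have h := Submodule.mul_mem_mul hf hg
  unfold VV at h
  rw [Submodule.span_mul_span] at h
  refine (Submodule.span_le.2 ?_) h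
  rintro _ ⟨_, ⟨a, rfl⟩, _, ⟨b, rfl⟩, rfl⟩
  have := mon_mem (d + e) (a.1 + b.1) (a.2 + b.2) (by omega) (by omega)
  have h2 : mon d a * mon e b
      = fun p : ℂ × ℂ => p.1 ^ ((a.1 : ℕ) + b.1) * p.2 ^ ((a.2 : ℕ) + b.2) := by
    ext p
    simp only [mon, Pi.mul_apply]
    ring
  show mon d a * mon e b ∈ VV (d + e)
  rw [h2]
  exact this

lemma VV_pow {d : ℕ} {f : ℂ × ℂ → ℂ} (hf : f ∈ VV d) (m : ℕ) : f ^ m ∈ VV (m * d) := by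
  induction m with
  | zero =>
    have := mon_mem (0 * d) 0 0 (by omega) (by omega)
    convert this using 1
    ext p; simp
  | succ m ih =>
    rw [pow_succ, Nat.succ_mul]
    exact VV_mul ih hf

lemma VV_g {n : ℕ} (hn : 1 ≤ n) (P Q : Polynomial ℂ) (hP : P.natDegree ≤ n)
    (hQ : Q.natDegree ≤ n) :
    (fun p : ℂ × ℂ => Q.eval p.1 * p.2 - P.eval p.1) ∈ VV n := by
  have h1 : (fun p : ℂ × ℂ => Q.eval p.1 * p.2) ∈ VV n := by
    have : (fun p : ℂ × ℂ => Q.eval p.1 * p.2) = ∑ i ∈ Finset.range (n + 1), Q.coeff i •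
        (fun p : ℂ × ℂ => p.1 ^ i * p.2 ^ 1) := by
      ext p
      rw [Polynomial.eval_eq_sum_range' (Nat.lt_succ_of_le hQ)]
      simp [Finset.sum_apply, Finset.sum_mul, mul_assoc]
    rw [this]
    exact Submodule.sum_mem _ fun i hi => Submodule.smul_mem _ _
      (mon_mem n i 1 (by have := Finset.mem_range.1 hi; omega) hn)
  have h2 : (fun p : ℂ × ℂ => P.eval p.1) ∈ VV n := by
    have : (fun p : ℂ × ℂ => P.eval p.1) = ∑ i ∈ Finset.range (n + 1), P.coeff i •
        (fun p : ℂ × ℂ => p.1 ^ i * p.2 ^ 0) := by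
      ext p
      rw [Polynomial.eval_eq_sum_range' (Nat.lt_succ_of_le hP)]
      simp [Finset.sum_apply]
    rw [this]
    exact Submodule.sum_mem _ fun i hi => Submodule.smul_mem _ _
      (mon_mem n i 0 (by have := Finset.mem_range.1 hi; omega) (by omega))
  exact Submodule.sub_mem _ h1 h2

lemma VV_diff {d : ℕ} {f : ℂ × ℂ → ℂ} (hf : f ∈ VV d) (z : ℂ) :
    Differentiable ℂ fun w => f (z, w) := by
  obtain ⟨c, hc⟩ := mem_VV.1 hf
  simp only [hc, mon]
  fun_prop

lemma coef_bound (K : Set (ℂ × ℂ)) (C : ℝ)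
    (hC : ∀ d, 1 ≤ d → ∀ c, Nrm d c → ∃ p ∈ K, Real.exp (-C * d) < ‖ev d c p‖)
    (d : ℕ) (hd : 1 ≤ d) (c : Ix d → ℂ) (B : ℝ)
    (hB : ∀ p ∈ K, ‖∑ a, c a * mon d a p‖ ≤ B) (a : Ix d) : ‖c a‖ ≤ B * Real.exp (C * d) := by
  obtain ⟨m, -, hm⟩ := Finset.exists_max_image Finset.univ (fun a => ‖c a‖) ⟨a, Finset.mem_univ a⟩
  have hm' : ∀ a, ‖c a‖ ≤ ‖c m‖ := fun a => hm a (Finset.mem_univ a)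
  refine (hm' a).trans ?_
  by_cases h0 : c m = 0
  · rw [h0, norm_zero]
    refine mul_nonneg ?_ (Real.exp_pos _).le
    have : Nrm d (fun _ _ => 1) := ⟨fun i _ j _ => by simp, 0, by omega, 0, by omega, by simp⟩
    obtain ⟨p, hp, -⟩ := hC d hd _ this
    exact (norm_nonneg _).trans (hB p hp)
  have hmp : 0 < ‖c m‖ := norm_pos_iff.2 h0
  set c' : ℕ → ℕ → ℂ := fun i j => if h : i < d + 1 ∧ j < d + 1 then
    c (⟨i, h.1⟩, ⟨j, h.2⟩) / c m else 0 with hc'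
  have hN : Nrm d c' := by
    constructor
    · intro i hi j hj
      simp only [hc']
      rw [dif_pos ⟨by omega, by omega⟩, norm_div, div_le_one hmp]
      exact hm' _
    · refine ⟨m.1, by omega, m.2, by omega, ?_⟩
      simp only [hc']
      rw [dif_pos ⟨by omega, by omega⟩]
      simp [h0]
  obtain ⟨p, hp, hlt⟩ := hC d hd c' hN
  have hev : ev d c' p = (∑ a, c a * mon d a p) / c m := by
    unfold ev
    rw [Fintype.sum_prod_type, Finset.sum_range, Finset.sum_div]
    refine Finset.sum_congr rfl fun i _ => ?_
    rw [Finset.sum_range, Finset.sum_div]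
    refine Finset.sum_congr rfl fun j _ => ?_
    simp only [hc', mon]
    rw [dif_pos ⟨i.2, j.2⟩]
    simp only [Fin.eta]
    ring
  rw [hev, norm_div, lt_div_iff₀ hmp] at hlt
  have h2 := hlt.trans_le (hB p hp)
  have h3 : ‖c m‖ = (Real.exp (-C * d) * ‖c m‖) * Real.exp (C * d) := by
    rw [mul_right_comm, ← Real.exp_add]; simp
  rw [h3]
  exact mul_le_mul_of_nonneg_right h2.le (Real.exp_pos _).le

/-- thickening in the second variable -/
def Lc (K : Set (ℂ × ℂ)) (η : ℝ) : Set (ℂ × ℂ) :=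
  (fun q : (ℂ × ℂ) × ℂ => (q.1.1, q.1.2 + q.2)) '' (K ×ˢ closedBall 0 η)

/-- the boundary of the thickening -/
def Ls (K : Set (ℂ × ℂ)) (η : ℝ) : Set (ℂ × ℂ) :=
  (fun q : (ℂ × ℂ) × ℂ => (q.1.1, q.1.2 + q.2)) '' (K ×ˢ sphere 0 η)

lemma Lc_compact {K : Set (ℂ × ℂ)} (hK : IsCompact K) (η : ℝ) : IsCompact (Lc K η) :=
  (hK.prod (isCompact_closedBall 0 η)).image (by fun_prop)

lemma Ls_compact {K : Set (ℂ × ℂ)} (hK : IsCompact K) (η : ℝ) : IsCompact (Ls K η) :=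
  (hK.prod (isCompact_sphere 0 η)).image (by fun_prop)

lemma Ls_sub (K : Set (ℂ × ℂ)) (η : ℝ) : Ls K η ⊆ Lc K η :=
  Set.image_mono (Set.prod_mono le_rfl sphere_subset_closedBall)

lemma Lc_mono (K : Set (ℂ × ℂ)) {η η' : ℝ} (h : η' ≤ η) : Lc K η' ⊆ Lc K η :=
  Set.image_mono (Set.prod_mono le_rfl (closedBall_subset_closedBall h))

lemma sub_Lc (K : Set (ℂ × ℂ)) {η : ℝ} (h : 0 ≤ η) : K ⊆ Lc K η := by
  intro p hp
  exact ⟨(p, 0), ⟨hp, by simpa using h⟩, by simp⟩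

lemma Ls_nonempty {K : Set (ℂ × ℂ)} (hK : K.Nonempty) {η : ℝ} (h : 0 ≤ η) : (Ls K η).Nonempty := by
  obtain ⟨p, hp⟩ := hK
  exact ⟨_, (p, (η : ℂ)), ⟨hp, by simp [abs_of_nonneg h]⟩, rfl⟩

lemma max_L (K : Set (ℂ × ℂ)) {η : ℝ} (hη : 0 < η) {d : ℕ} {f : ℂ × ℂ → ℂ} (hf : f ∈ VV d)
    (B : ℝ) (hB : ∀ p ∈ Ls K η, ‖f p‖ ≤ B) : ∀ p ∈ Lc K η, ‖f p‖ ≤ B := by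
  rintro _ ⟨⟨⟨z, w⟩, v⟩, ⟨hp, hv⟩, rfl⟩
  refine Complex.norm_le_of_forall_mem_frontier_norm_le (f := fun w => f (z, w)) (U := ball w η)
    isBounded_ball (VV_diff hf z).diffContOnCl ?_ ?_
  · intro y hy
    rw [frontier_ball _ hη.ne'] at hy
    refine hB _ ⟨((z, w), y - w), ⟨hp, ?_⟩, by simp⟩
    simpa [dist_eq_norm] using hy
  · rw [closure_ball _ hη.ne']
    simpa [dist_eq_norm] using hv

lemma poly_exp (c : ℝ) (m : ℕ) (τ : ℝ) (hτ : 0 < τ) :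
    ∀ᶠ d : ℕ in atTop, c * ((d : ℝ) + 1) ^ m ≤ Real.exp (τ * d) := by
  have h := (isLittleO_pow_exp_pos_mul_atTop m hτ).bound
    (c := 1 / ((|c| + 1) * Real.exp τ)) (by positivity)
  have h1 : Tendsto (fun d : ℕ => (d : ℝ) + 1) atTop atTop :=
    tendsto_atTop_add_const_right _ _ tendsto_natCast_atTop_atTop
  filter_upwards [h1.eventually h] with d hd
  rw [Real.norm_of_nonneg (by positivity), Real.norm_of_nonneg (by positivity), mul_add, mul_one,
    Real.exp_add, div_mul_eq_mul_div, le_div_iff₀ (by positivity), one_mul] at hd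
  have h2 : ((d : ℝ) + 1) ^ m * (|c| + 1) ≤ Real.exp (τ * d) := by
    refine le_of_mul_le_mul_right ?_ (Real.exp_pos τ)
    linarith
  have h3 : c * ((d : ℝ) + 1) ^ m ≤ (|c| + 1) * ((d : ℝ) + 1) ^ m :=
    mul_le_mul_of_nonneg_right (by linarith [le_abs_self c]) (by positivity)
  linarith


/-- one fixed degree: determinant decay -/
lemma stage_deg (K : Set (ℂ × ℂ)) (hK : IsCompact K) (hne : K.Nonempty)
    (hun : ∀ d, ∀ c : Ix d → ℂ, (∀ p ∈ K, ∑ a, c a * mon d a p = 0) → c = 0)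
    {κ : Type} [DecidableEq κ] (A : Finset κ) (g : κ → ℂ × ℂ → ℂ) (n : κ → ℕ)
    (hn : ∀ k, 1 ≤ n k) (hg : ∀ k, g k ∈ VV (n k)) (η η' : ℝ) (hη : 0 < η) (hη' : η' ≤ η)
    (s t : ℝ) (hlow : ∀ p ∈ Ls K η, ∃ k ∈ A, Real.exp (s * n k) ≤ ‖g k p‖)
    (hup : ∀ k ∈ A, ∀ p ∈ Lc K η', ‖g k p‖ ≤ Real.exp (t * n k))
    (d : ℕ) (hdvd : ∀ k ∈ A, n k ∣ d) (x' : Ix (2 * d) → ℂ × ℂ) (hx' : ∀ i, x' i ∈ Lc K η') :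
    ∃ x : Ix (2 * d) → ℂ × ℂ, (∀ i, x i ∈ Lc K η) ∧
      ‖(Em (mon (2 * d)) x').det‖ ≤ (Fintype.card (Ix (2 * d))).factorial *
        (Fintype.card (Ix (2 * d)) : ℝ) ^ (Fintype.card (Ix (2 * d))) *
        (A.card * (Fintype.card (Ix d)) * (4 * (Fintype.card (Ix d) : ℝ)) ^ A.card *
          Real.exp ((t - s) * d)) ^ (Fintype.card (Ix d)) * ‖(Em (mon (2 * d)) x).det‖ := by
  obtain ⟨x, hxL, hxF⟩ := fekete (mon (2 * d)) (mon_cont _) (Lc K η) (Lc_compact hK η)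
    (hne.mono (sub_Lc K hη.le))
  refine ⟨x, hxL, ?_⟩
  have hx0 : (Em (mon (2 * d)) x).det ≠ 0 := by
    obtain ⟨y, hy, hy0⟩ := exists_det_ne (mon (2 * d)) K (hun _)
    intro h0
    have := hxF y (fun i => sub_Lc K hη.le (hy i))
    rw [h0, norm_zero] at this
    exact hy0 (norm_le_zero_iff.1 this)
  obtain ⟨y, hyL, hyF⟩ := fekete (mon d) (mon_cont _) (Ls K η) (Ls_compact hK η)
    (Ls_nonempty hne hη.le)
  have hy0 : (Em (mon d) y).det ≠ 0 := by
    obtain ⟨y', hy', hy0⟩ := exists_det_ne (mon d) (Ls K η) (by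
      intro c hc
      apply hun d c
      intro p hp
      have := max_L K hη (d := d) (f := fun p => ∑ a, c a * mon d a p)
        (mem_VV.2 ⟨c, fun p => rfl⟩) 0 (fun p hp => by simp [hc p hp]) p (sub_Lc K hη.le hp)
      exact norm_le_zero_iff.1 this)
    intro h0
    have := hyF y' hy'
    rw [h0, norm_zero] at this
    exact hy0 (norm_le_zero_iff.1 this)
  set N' := Fintype.card (Ix d) with hN'
  have hN'1 : 1 ≤ N' := Fintype.card_pos
  have hN'p : (0 : ℝ) < N' := by exact_mod_cast hN'1
  obtain ⟨c, hc1, hc2⟩ := comb (Finset.univ : Finset (Ix d)) N' hN'1 (by simp [hN']) A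
    (fun k i => g k (y i) ^ (d / n k))
  set F : ℂ × ℂ → ℂ := fun p => ∑ k ∈ A, c k * g k p ^ (d / n k) with hF
  have hFV : F ∈ VV d := by
    have : F = ∑ k ∈ A, c k • (g k ^ (d / n k)) := by
      ext p; simp [hF, Finset.sum_apply]
    rw [this]
    refine Submodule.sum_mem _ fun k hk => Submodule.smul_mem _ _ ?_
    have h := VV_pow (hg k) (d / n k)
    rwa [Nat.div_mul_cancel (hdvd k hk)] at h
  set β : ℝ := (1 / (4 * N' : ℝ)) ^ A.card with hβ
  have hβp : 0 < β := by positivity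
  have hmulk : ∀ k ∈ A, ((d / n k : ℕ) : ℝ) * n k = d := by
    intro k hk
    exact_mod_cast Nat.div_mul_cancel (hdvd k hk)
  have hFy : ∀ i, Real.exp (s * d) * β ≤ ‖F (y i)‖ := by
    intro i
    obtain ⟨k, hk, hlk⟩ := hlow (y i) (hyL i)
    refine le_trans ?_ (hc2 i (Finset.mem_univ i) k hk)
    refine mul_le_mul_of_nonneg_right ?_ hβp.le
    rw [norm_pow]
    calc Real.exp (s * d) = Real.exp (s * n k) ^ (d / n k) := by
          rw [← Real.exp_nat_mul, ← hmulk k hk]; ring_nf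
      _ ≤ _ := pow_le_pow_left₀ (Real.exp_pos _).le hlk _
  have hFy0 : ∀ i, F (y i) ≠ 0 := fun i h0 => by
    have := hFy i
    rw [h0, norm_zero] at this
    exact absurd this (not_le.2 (mul_pos (Real.exp_pos _) hβp))
  have hFup : ∀ p ∈ Lc K η', ‖F p‖ ≤ A.card * Real.exp (t * d) := by
    intro p hp
    refine (norm_sum_le _ _).trans ?_
    rw [← nsmul_eq_mul]
    refine Finset.sum_le_card_nsmul _ _ _ fun k hk => ?_
    rw [norm_mul, norm_pow]
    calc _ ≤ 1 * Real.exp (t * n k) ^ (d / n k) :=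
          mul_le_mul (hc1 k) (pow_le_pow_left₀ (norm_nonneg _) (hup k hk p hp) _)
            (by positivity) zero_le_one
      _ = Real.exp (t * d) := by rw [one_mul, ← Real.exp_nat_mul, ← hmulk k hk]; ring_nf
  have hsumF : ∀ (a : Ix d → ℂ) p, ∑ i, a i * (F p * mon d i p) = F p * ∑ i, a i * mon d i p := by
    intro a p
    rw [Finset.mul_sum]
    exact Finset.sum_congr rfl fun i _ => by ring
  refine det_step (mon (2 * d)) x hx0 (Lc K η) (Lc K η') hxL (Lc_mono K hη') hxF
    (fun i p => F p * mon d i p) ?_ ?_ _ (by positivity) ?_ x' hx'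
  · intro i
    have h1 : mon d i ∈ VV d := Submodule.subset_span ⟨i, rfl⟩
    have h2 := VV_mul hFV h1
    rw [← two_mul] at h2
    exact mem_VV.1 h2
  · intro a ha
    have h1 : Matrix.vecMul a (Em (mon d) y) = 0 := by
      ext j
      have := ha (y j)
      rw [hsumF] at this
      simpa [Matrix.vecMul, dotProduct, Em] using (mul_eq_zero.1 this).resolve_left (hFy0 j)
    exact Matrix.eq_zero_of_vecMul_eq_zero hy0 h1
  · intro a ha p hp
    have hval : ∀ b, ‖∑ i, a i * mon d i (y b)‖ ≤ (Real.exp (s * d) * β)⁻¹ := by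
      intro b
      have h1 := ha (y b) (Ls_sub K η (hyL b))
      rw [hsumF, norm_mul] at h1
      rw [← one_div, le_div_iff₀ (by positivity)]
      calc _ ≤ ‖∑ i, a i * mon d i (y b)‖ * ‖F (y b)‖ :=
            mul_le_mul_of_nonneg_left (hFy b) (norm_nonneg _)
        _ ≤ 1 := by rw [mul_comm]; exact h1
    have hall := max_L K hη (d := d) (f := fun p => ∑ i, a i * mon d i p)
      (mem_VV.2 ⟨a, fun p => rfl⟩) (N' * (Real.exp (s * d) * β)⁻¹) (by
        intro q hq
        show ‖∑ i, a i * mon d i q‖ ≤ _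
        rw [← lag_sum (mon d) y hy0 a q]
        refine (norm_sum_le _ _).trans ?_
        rw [← nsmul_eq_mul, hN', ← Finset.card_univ]
        refine Finset.sum_le_card_nsmul _ _ _ fun b _ => ?_
        rw [norm_mul]
        calc _ ≤ (Real.exp (s * d) * β)⁻¹ * 1 :=
              mul_le_mul (hval b) (lag_norm (mon d) y hy0 _ hyL hyF b q hq) (norm_nonneg _)
                (by positivity)
          _ = _ := mul_one _) p (Lc_mono K hη' hp)
    rw [hsumF, norm_mul]
    calc _ ≤ (A.card * Real.exp (t * d)) * (N' * (Real.exp (s * d) * β)⁻¹) :=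
          mul_le_mul (hFup p hp) hall (norm_nonneg _) (by positivity)
      _ = _ := by
          rw [hβ, mul_inv, one_div, inv_pow, inv_inv, ← Real.exp_neg, sub_mul, sub_eq_add_neg,
            Real.exp_add]
          ring


lemma stage (K : Set (ℂ × ℂ)) (hK : IsCompact K) (hne : K.Nonempty)
    (hun : ∀ d, ∀ c : Ix d → ℂ, (∀ p ∈ K, ∑ a, c a * mon d a p = 0) → c = 0)
    {κ : Type} [DecidableEq κ] (P Q : κ → Polynomial ℂ) (n : κ → ℕ)
    (hn : ∀ k, 1 ≤ n k) (hP : ∀ k, (P k).natDegree ≤ n k) (hQ : ∀ k, (Q k).natDegree ≤ n k)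
    (t τ : ℝ) (hτ : 0 < τ)
    (h1 : ∀ k, ∀ p ∈ K, ‖(Q k).eval p.1 * p.2 - (P k).eval p.1‖ ≤ Real.exp (t * n k))
    (h2 : ∀ p ∈ K, ∀ N : ℕ, ∃ k, N ≤ n k ∧ Real.exp ((t + 4 * τ) * n k) < ‖(Q k).eval p.1‖)
    (η : ℝ) (hη : 0 < η) :
    ∃ η', 0 < η' ∧ η' ≤ η ∧ ∃ M, 1 ≤ M ∧ ∃ N0 : ℕ, ∀ d, N0 ≤ d → M ∣ d →
      ∀ x' : Ix (2 * d) → ℂ × ℂ, (∀ i, x' i ∈ Lc K η') →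
      ∃ x : Ix (2 * d) → ℂ × ℂ, (∀ i, x i ∈ Lc K η) ∧
        ‖(Em (mon (2 * d)) x').det‖ ≤
          Real.exp (-(τ / 8) * d) ^ (Fintype.card (Ix (2 * d))) * ‖(Em (mon (2 * d)) x).det‖ := by
  obtain ⟨N1, hN1⟩ : ∃ N1 : ℕ, 2 / η ≤ Real.exp (τ * N1) := by
    obtain ⟨m, hm⟩ := exists_nat_ge (2 / η / τ)
    refine ⟨m, ?_⟩
    rw [div_le_iff₀ hτ] at hm
    linarith [Real.add_one_le_exp (τ * m)]
  obtain ⟨A, hA1, hA2⟩ : ∃ A : Finset κ, (∀ k ∈ A, N1 ≤ n k) ∧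
      ∀ p ∈ K, ∃ k ∈ A, Real.exp ((t + 4 * τ) * n k) < ‖(Q k).eval p.1‖ := by
    let U : {k // N1 ≤ n k} → Set (ℂ × ℂ) :=
      fun k => {p | Real.exp ((t + 4 * τ) * n k.1) < ‖(Q k.1).eval p.1‖}
    obtain ⟨T, hT⟩ := hK.elim_finite_subcover U
      (fun k => isOpen_lt continuous_const (((Q k.1).continuous.comp continuous_fst).norm)) (by
        intro p hp
        obtain ⟨k, hk1, hk2⟩ := h2 p hp N1
        exact Set.mem_iUnion.2 ⟨⟨k, hk1⟩, hk2⟩)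
    refine ⟨T.image Subtype.val, ?_, ?_⟩
    · intro k hk
      obtain ⟨k', -, rfl⟩ := Finset.mem_image.1 hk
      exact k'.2
    · intro p hp
      obtain ⟨k, hk⟩ := Set.mem_iUnion.1 (hT hp)
      obtain ⟨hkT, hk⟩ := Set.mem_iUnion.1 hk
      exact ⟨k.1, Finset.mem_image_of_mem _ hkT, hk⟩
  set g : κ → ℂ × ℂ → ℂ := fun k p => (Q k).eval p.1 * p.2 - (P k).eval p.1 with hg
  have hlow : ∀ p ∈ Ls K η, ∃ k ∈ A, Real.exp ((t + 3 * τ) * n k) ≤ ‖g k p‖ := by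
    rintro _ ⟨⟨⟨z, w⟩, v⟩, ⟨hp, hv⟩, rfl⟩
    obtain ⟨k, hk, hlt⟩ := hA2 _ hp
    refine ⟨k, hk, ?_⟩
    have hv' : ‖v‖ = η := by simpa using hv
    have hb := h1 k _ hp
    simp only at hb hlt
    have he : g k (z, w + v) = (Q k).eval z * v + ((Q k).eval z * w - (P k).eval z) := by
      simp only [hg]; ring
    have hge : ‖(Q k).eval z * v‖ - ‖(Q k).eval z * w - (P k).eval z‖ ≤ ‖g k (z, w + v)‖ := by
      rw [he]
      have := norm_sub_le ((Q k).eval z * v + ((Q k).eval z * w - (P k).eval z))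
        ((Q k).eval z * w - (P k).eval z)
      rw [add_sub_cancel_right] at this
      linarith
    rw [norm_mul, hv'] at hge
    have hexp : 2 ≤ η * Real.exp (τ * n k) := by
      have h3 : Real.exp (τ * N1) ≤ Real.exp (τ * n k) := by
        apply Real.exp_le_exp.2
        have : (N1 : ℝ) ≤ n k := by exact_mod_cast hA1 k hk
        nlinarith
      have := hN1.trans h3
      rw [div_le_iff₀ hη] at this
      linarith
    have h4 : Real.exp ((t + 4 * τ) * n k) = Real.exp ((t + 3 * τ) * n k) * Real.exp (τ * n k) := by
      rw [← Real.exp_add]; ring_nf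
    have h5 : Real.exp (t * n k) ≤ Real.exp ((t + 3 * τ) * n k) := by
      apply Real.exp_le_exp.2
      have : (0 : ℝ) ≤ n k := by positivity
      nlinarith
    have h6 := Real.exp_pos ((t + 3 * τ) * n k)
    show Real.exp ((t + 3 * τ) * n k) ≤ ‖g k (z, w + v)‖
    have h7 : Real.exp ((t + 4 * τ) * n k) * η ≤ ‖(Q k).eval z‖ * η :=
      mul_le_mul_of_nonneg_right hlt.le hη.le
    rw [h4] at h7
    nlinarith
  obtain ⟨η', hη'0, hη'1, hup⟩ : ∃ η', 0 < η' ∧ η' ≤ η ∧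
      ∀ k ∈ A, ∀ p ∈ Lc K η', ‖g k p‖ ≤ Real.exp ((t + τ) * n k) := by
    have hev : ∀ k ∈ A, ∀ᶠ δ in nhdsWithin (0 : ℝ) (Set.Ioi 0),
        ∀ p ∈ Lc K δ, ‖g k p‖ ≤ Real.exp ((t + τ) * n k) := by
      intro k _
      obtain ⟨B, hB⟩ := hK.exists_bound_of_continuousOn (f := fun p : ℂ × ℂ => (Q k).eval p.1)
        ((Q k).continuous.comp continuous_fst).continuousOn
      have hgap : 0 < Real.exp ((t + τ) * n k) - Real.exp (t * n k) := by
        rw [sub_pos]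
        apply Real.exp_lt_exp.2
        have : (1 : ℝ) ≤ n k := by exact_mod_cast hn k
        nlinarith
      have hc : Tendsto (fun δ : ℝ => B * δ) (nhdsWithin 0 (Set.Ioi 0)) (nhds 0) := by
        have : Tendsto (fun δ : ℝ => B * δ) (nhds 0) (nhds (B * 0)) :=
          (continuous_const.mul continuous_id).tendsto 0
        rw [mul_zero] at this
        exact this.mono_left nhdsWithin_le_nhds
      filter_upwards [hc.eventually (gt_mem_nhds hgap), self_mem_nhdsWithin] with δ hδ hδ0
      rintro _ ⟨⟨⟨z, w⟩, v⟩, ⟨hp, hv⟩, rfl⟩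
      have hv' : ‖v‖ ≤ δ := by simpa using hv
      have he : g k (z, w + v) = (Q k).eval z * v + ((Q k).eval z * w - (P k).eval z) := by
        simp only [hg]; ring
      have hb := h1 k _ hp
      have hq := hB _ hp
      simp only at hb hq
      show ‖g k (z, w + v)‖ ≤ _
      rw [he]
      refine (norm_add_le _ _).trans ?_
      rw [norm_mul]
      have : ‖(Q k).eval z‖ * ‖v‖ ≤ B * δ :=
        mul_le_mul hq hv' (norm_nonneg _) ((norm_nonneg _).trans hq)
      linarith
    have h3 := (Filter.eventually_all_finset A).2 hev
    obtain ⟨δ, ⟨hδ1, hδ2⟩, hδ3⟩ := (h3.and (Ioc_mem_nhdsGT hη)).exists.imp fun δ h => And.intro h.2 h.1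
    exact ⟨δ, hδ1, hδ2, hδ3⟩
  refine ⟨η', hη'0, hη'1, ∏ k ∈ A, n k, Finset.one_le_prod' fun k _ => hn k, ?_⟩
  have hE1 := poly_exp (A.card * 4 ^ A.card) (2 + 2 * A.card) τ hτ
  have hE2 := poly_exp 16 4 (τ / 8) (by positivity)
  obtain ⟨N0, hN0⟩ := eventually_atTop.1 (hE1.and hE2)
  refine ⟨N0, fun d hd hM x' hx' => ?_⟩
  obtain ⟨hd1, hd2⟩ := hN0 d hd
  obtain ⟨x, hx, hdet⟩ := stage_deg K hK hne hun A g n hn (fun k => VV_g (hn k) _ _ (hP k) (hQ k))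
    η η' hη hη'1 (t + 3 * τ) (t + τ) hlow hup d
    (fun k hk => (Finset.dvd_prod_of_mem n hk).trans hM) x' hx'
  refine ⟨x, hx, hdet.trans (mul_le_mul_of_nonneg_right ?_ (norm_nonneg _))⟩
  set N := Fintype.card (Ix (2 * d)) with hN
  set N' := Fintype.card (Ix d) with hN'
  have hNv : (N : ℝ) = (2 * d + 1) ^ 2 := by
    rw [hN]; simp; ring
  have hNv' : (N' : ℝ) = (d + 1) ^ 2 := by
    rw [hN']; simp; ring
  have hθ : A.card * (N' : ℝ) * (4 * (N' : ℝ)) ^ A.card * Real.exp ((t + τ - (t + 3 * τ)) * d)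
      ≤ Real.exp (-τ * d) := by
    have h3 : A.card * (N' : ℝ) * (4 * (N' : ℝ)) ^ A.card
        = A.card * 4 ^ A.card * ((d : ℝ) + 1) ^ (2 + 2 * A.card) := by
      rw [hNv', mul_pow, ← pow_mul, pow_add]; ring
    rw [h3]
    calc _ ≤ Real.exp (τ * d) * Real.exp ((t + τ - (t + 3 * τ)) * d) :=
          mul_le_mul_of_nonneg_right hd1 (Real.exp_pos _).le
      _ = _ := by rw [← Real.exp_add]; ring_nf
  have hfac : (N.factorial : ℝ) * (N : ℝ) ^ N ≤ Real.exp (τ / 8 * d) ^ N := by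
    have h3 : (N.factorial : ℝ) ≤ (N : ℝ) ^ N := by exact_mod_cast Nat.factorial_le_pow N
    calc _ ≤ (N : ℝ) ^ N * (N : ℝ) ^ N := mul_le_mul_of_nonneg_right h3 (by positivity)
      _ = ((N : ℝ) ^ 2) ^ N := by rw [← mul_pow, sq]
      _ ≤ _ := by
          refine pow_le_pow_left₀ (by positivity) (le_trans ?_ hd2) _
          rw [hNv]
          have : (2 * (d : ℝ) + 1) ≤ 2 * (d + 1) := by linarith
          calc (((2 * (d : ℝ) + 1)) ^ 2) ^ 2 ≤ ((2 * ((d : ℝ) + 1)) ^ 2) ^ 2 := by gcongr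
            _ = _ := by ring
  calc _ ≤ Real.exp (τ / 8 * d) ^ N * Real.exp (-τ * d) ^ N' :=
        mul_le_mul hfac (pow_le_pow_left₀ (by positivity) hθ _) (by positivity) (by positivity)
    _ ≤ _ := by
        rw [← Real.exp_nat_mul, ← Real.exp_nat_mul, ← Real.exp_nat_mul, ← Real.exp_add]
        apply Real.exp_le_exp.2
        have h4 : (N : ℝ) ≤ 4 * N' := by rw [hNv, hNv']; nlinarith [Nat.cast_nonneg (α := ℝ) d]
        have h5 : 0 ≤ τ * d := by positivity
        nlinarith

lemma chain (K : Set (ℂ × ℂ)) (hK : IsCompact K) (hne : K.Nonempty)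
    (hun : ∀ d, ∀ c : Ix d → ℂ, (∀ p ∈ K, ∑ a, c a * mon d a p = 0) → c = 0)
    {κ : Type} [DecidableEq κ] (P Q : κ → Polynomial ℂ) (n : κ → ℕ)
    (hn : ∀ k, 1 ≤ n k) (hP : ∀ k, (P k).natDegree ≤ n k) (hQ : ∀ k, (Q k).natDegree ≤ n k)
    (t τ : ℝ) (hτ : 0 < τ)
    (h1 : ∀ k, ∀ p ∈ K, ‖(Q k).eval p.1 * p.2 - (P k).eval p.1‖ ≤ Real.exp (t * n k))
    (h2 : ∀ p ∈ K, ∀ N : ℕ, ∃ k, N ≤ n k ∧ Real.exp ((t + 4 * τ) * n k) < ‖(Q k).eval p.1‖)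
    (J : ℕ) :
    ∃ η', 0 < η' ∧ ∃ M, 1 ≤ M ∧ ∃ N0 : ℕ, ∀ d, N0 ≤ d → M ∣ d →
      ∀ x' : Ix (2 * d) → ℂ × ℂ, (∀ i, x' i ∈ Lc K η') →
      ∃ x : Ix (2 * d) → ℂ × ℂ, (∀ i, x i ∈ Lc K 1) ∧
        ‖(Em (mon (2 * d)) x').det‖ ≤
          Real.exp (-(J * (τ / 8)) * d) ^ (Fintype.card (Ix (2 * d))) *
            ‖(Em (mon (2 * d)) x).det‖ := by
  induction J with
  | zero => exact ⟨1, one_pos, 1, le_rfl, 0, fun d _ _ x' hx' => ⟨x', hx', by simp⟩⟩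
  | succ J ih =>
    obtain ⟨η, hη, M, hM, N0, h⟩ := ih
    obtain ⟨η', hη', -, M', hM', N0', h'⟩ := stage K hK hne hun P Q n hn hP hQ t τ hτ h1 h2 η hη
    refine ⟨η', hη', M * M', Nat.one_le_iff_ne_zero.2 (by positivity), max N0 N0', fun d hd hdv x' hx' => ?_⟩
    obtain ⟨y, hy, hy1⟩ := h' d (le_of_max_le_right hd) ((Dvd.intro_left _ rfl).trans hdv) x' hx'
    obtain ⟨x, hx, hx1⟩ := h d (le_of_max_le_left hd) ((Dvd.intro _ rfl).trans hdv) y hy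
    refine ⟨x, hx, hy1.trans ?_⟩
    calc _ ≤ _ := mul_le_mul_of_nonneg_left hx1 (by positivity)
      _ = _ := by
          rw [← mul_assoc, ← mul_pow, ← Real.exp_add]
          push_cast
          ring_nf

lemma Zset_of_two (K : Set (ℂ × ℂ)) (hK : IsCompact K)
    {κ : Type} [DecidableEq κ] (P Q : κ → Polynomial ℂ) (n : κ → ℕ)
    (hn : ∀ k, 1 ≤ n k) (hP : ∀ k, (P k).natDegree ≤ n k) (hQ : ∀ k, (Q k).natDegree ≤ n k)
    (t s : ℝ) (hts : t < s)
    (h1 : ∀ k, ∀ p ∈ K, ‖(Q k).eval p.1 * p.2 - (P k).eval p.1‖ ≤ Real.exp (t * n k))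
    (h2 : ∀ p ∈ K, ∀ N : ℕ, ∃ k, N ≤ n k ∧ Real.exp (s * n k) < ‖(Q k).eval p.1‖) :
    Zset K := by
  by_contra hZ
  unfold Zset at hZ
  push Not at hZ
  obtain ⟨C, hC⟩ := hZ
  have hne : K.Nonempty := by
    have : Nrm 1 (fun _ _ => 1) := ⟨fun i _ j _ => by simp, 0, by omega, 0, by omega, by simp⟩
    obtain ⟨p, hp, -⟩ := hC 1 le_rfl _ this
    exact ⟨p, hp⟩
  have hcb := coef_bound K C hC
  have hun : ∀ d, ∀ c : Ix d → ℂ, (∀ p ∈ K, ∑ a, c a * mon d a p = 0) → c = 0 := by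
    intro d c hc
    rcases Nat.eq_zero_or_pos d with rfl | hd
    · obtain ⟨p, hp⟩ := hne
      have := hc p hp
      ext a
      have ha : a = (0, 0) := Prod.ext (Subsingleton.elim (α := Fin 1) _ _) (Subsingleton.elim (α := Fin 1) _ _)
      subst ha
      simpa [mon, Fintype.sum_prod_type] using this
    · ext a
      have := hcb d hd c 0 (fun p hp => by simp [hc p hp]) a
      simpa using this
  obtain ⟨τ, hτ, hsτ⟩ : ∃ τ, 0 < τ ∧ s = t + 4 * τ := ⟨(s - t) / 4, by linarith, by ring⟩
  subst hsτ
  obtain ⟨ρ, hρ0, hρ⟩ : ∃ ρ : ℝ, 0 ≤ ρ ∧ ∀ p ∈ Lc K 1, ‖p‖ ≤ Real.exp ρ := by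
    obtain ⟨B, hB⟩ := (Lc_compact hK 1).exists_bound_of_continuousOn (f := fun p : ℂ × ℂ => p)
      continuous_id.continuousOn
    refine ⟨max B 0, le_max_right _ _, fun p hp => (hB p hp).trans ?_⟩
    linarith [Real.add_one_le_exp (max B 0), le_max_left B 0]
  obtain ⟨J, hJ⟩ := exists_nat_ge ((4 * ρ + 2 * C + 1) / (τ / 8))
  rw [div_le_iff₀ (by positivity)] at hJ
  obtain ⟨η, hη, M, hM, N0, hch⟩ := chain K hK hne hun P Q n hn hP hQ t τ hτ h1 h2 J
  obtain ⟨N1, hN1⟩ := eventually_atTop.1 (poly_exp 32 4 1 one_pos)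
  set d := M * (max N0 N1 + 1) with hd
  have hdge : max N0 N1 + 1 ≤ d := Nat.le_mul_of_pos_left _ hM
  have hd0 : N0 ≤ d := (le_max_left N0 N1).trans (by omega)
  have hd1 : N1 ≤ d := (le_max_right N0 N1).trans (by omega)
  obtain ⟨x', hx'L, hx'F⟩ := fekete (mon (2 * d)) (mon_cont _) (Lc K η) (Lc_compact hK η)
    (hne.mono (sub_Lc K hη.le))
  have hx0 : (Em (mon (2 * d)) x').det ≠ 0 := by
    obtain ⟨y, hy, hy0⟩ := exists_det_ne (mon (2 * d)) K (hun _)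
    intro h0
    have := hx'F y (fun i => sub_Lc K hη.le (hy i))
    rw [h0, norm_zero] at this
    exact hy0 (norm_le_zero_iff.1 this)
  obtain ⟨x, hxL, hxd⟩ := hch d hd0 (Dvd.intro _ rfl) x' hx'L
  set N := Fintype.card (Ix (2 * d)) with hN
  have hNv : (N : ℝ) = (2 * d + 1) ^ 2 := by
    rw [hN]; simp; ring
  have hent : ∀ b j, ‖lag (mon (2 * d)) x' b (x j)‖ ≤ N * Real.exp ((4 * ρ + 2 * C) * d) := by
    intro b j
    unfold lag
    refine (norm_sum_le _ _).trans ?_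
    rw [← nsmul_eq_mul, hN, ← Finset.card_univ]
    refine Finset.sum_le_card_nsmul _ _ _ fun a _ => ?_
    have hco := hcb (2 * d) (by omega) (fun a => (Em (mon (2 * d)) x')⁻¹ b a) 1 (by
      intro p hp
      exact lag_norm _ x' hx0 _ hx'L hx'F b p (sub_Lc K hη.le hp)) a
    have hr := hρ _ (hxL j)
    have hr1 : ∀ m : Fin (2 * d + 1), ∀ y : ℂ, ‖y‖ ≤ Real.exp ρ → ‖y‖ ^ (m : ℕ) ≤ Real.exp (ρ * (2 * d)) := by
      intro m y hy
      calc ‖y‖ ^ (m : ℕ) ≤ Real.exp ρ ^ (m : ℕ) := pow_le_pow_left₀ (norm_nonneg _) hy _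
        _ ≤ Real.exp ρ ^ (2 * d) := pow_le_pow_right₀ (Real.one_le_exp hρ0) (by omega)
        _ = _ := by rw [← Real.exp_nat_mul]; push_cast; ring_nf
    rw [norm_mul]
    calc _ ≤ (1 * Real.exp (C * (2 * d : ℕ))) * (Real.exp (ρ * (2 * d)) * Real.exp (ρ * (2 * d))) := by
          refine mul_le_mul hco ?_ (norm_nonneg _) (by positivity)
          unfold mon
          rw [norm_mul, norm_pow, norm_pow]
          exact mul_le_mul (hr1 _ _ ((norm_fst_le _).trans hr)) (hr1 _ _ ((norm_snd_le _).trans hr))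
            (by positivity) (by positivity)
      _ = _ := by
          rw [one_mul, ← Real.exp_add, ← Real.exp_add]; push_cast; ring_nf
  have hdl := det_le_rows (Matrix.of fun b j => lag (mon (2 * d)) x' b (x j))
    (fun _ => N * Real.exp ((4 * ρ + 2 * C) * d)) hent
  rw [Finset.prod_const, Finset.card_univ, ← hN] at hdl
  rw [det_factor _ x' x hx0, norm_mul] at hxd
  have hpos := norm_pos_iff.2 hx0
  have hone : 1 ≤ Real.exp (-(J * (τ / 8)) * d) ^ N *
      ‖(Matrix.of fun b j => lag (mon (2 * d)) x' b (x j)).det‖ := by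
    refine le_of_mul_le_mul_left ?_ hpos
    linarith
  have hfac : (N.factorial : ℝ) ≤ (N : ℝ) ^ N := by exact_mod_cast Nat.factorial_le_pow N
  have hN2 : (N : ℝ) * N * 2 ≤ Real.exp (1 * d) := by
    refine le_trans ?_ (hN1 d hd1)
    rw [hNv]
    have : (2 * (d : ℝ) + 1) ≤ 2 * (d + 1) := by linarith
    calc ((2 * (d : ℝ) + 1)) ^ 2 * ((2 * (d : ℝ) + 1)) ^ 2 * 2
        ≤ (2 * ((d : ℝ) + 1)) ^ 2 * (2 * ((d : ℝ) + 1)) ^ 2 * 2 := by gcongr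
      _ = _ := by ring
  have hfin : (1 : ℝ) ≤ (1 / 2) ^ N := by
    calc 1 ≤ Real.exp (-(J * (τ / 8)) * d) ^ N *
          ((N : ℝ) ^ N * (N * Real.exp ((4 * ρ + 2 * C) * d)) ^ N) := by
            refine hone.trans (mul_le_mul_of_nonneg_left (hdl.trans ?_) (by positivity))
            exact mul_le_mul_of_nonneg_right hfac (by positivity)
      _ = ((N * N * 2) * Real.exp (-(J * (τ / 8)) * d + (4 * ρ + 2 * C) * d) / 2) ^ N := by
          rw [← mul_pow, ← mul_pow, Real.exp_add]; ring_nf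
      _ ≤ _ := by
          refine pow_le_pow_left₀ (by positivity) ?_ _
          apply div_le_div_of_nonneg_right _ two_pos.le
          calc _ ≤ Real.exp (1 * d) * Real.exp (-(J * (τ / 8)) * d + (4 * ρ + 2 * C) * d) :=
                mul_le_mul_of_nonneg_right hN2 (Real.exp_pos _).le
            _ ≤ 1 := by
                rw [← Real.exp_add]
                apply Real.exp_le_one_iff.2
                have : (0 : ℝ) ≤ d := by positivity
                nlinarith
  have : ((1 : ℝ) / 2) ^ N < 1 := pow_lt_one₀ (by norm_num) (by norm_num) (by
    have : 0 < N := Fintype.card_pos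
    omega)
  linarith


lemma Zset_empty : Zset ∅ := fun _ => ⟨1, le_rfl, fun _ _ => 1,
  ⟨fun i _ j _ => by simp, 0, by omega, 0, by omega, by simp⟩, by simp⟩

lemma thin_of_Zset_countable {ι : Type} [Countable ι] (K : ι → Set (ℂ × ℂ))
    (h : ∀ i, Zset (K i)) : Thin (⋃ i, K i) := by
  rcases isEmpty_or_nonempty ι with hι | hι
  · refine (thin_of_Zset (fun _ => ∅) fun _ => Zset_empty).mono ?_
    simp
  · obtain ⟨φ, hφ⟩ := exists_surjective_nat ι
    refine (thin_of_Zset (fun i => K (φ i)) fun i => h _).mono ?_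
    rw [hφ.iUnion_comp K]

lemma term_lt {n : ℕ} (hn : 1 ≤ n) {x : ℝ} (hx : 0 ≤ x) (t : ℝ) :
    ((1 / (n : ℝ) : ℝ) : EReal) * elog x < (t : EReal) ↔ x < Real.exp (t * n) := by
  have hn' : (0 : ℝ) < n := by exact_mod_cast hn
  unfold elog
  rcases hx.eq_or_lt with rfl | hx
  · rw [if_pos rfl, EReal.coe_mul_bot_of_pos (by positivity)]
    simp [Real.exp_pos, EReal.bot_lt_coe]
  · rw [if_neg hx.ne', ← EReal.coe_mul, EReal.coe_lt_coe_iff, ← Real.log_lt_iff_lt_exp hx,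
      one_div, inv_mul_lt_iff₀ hn', mul_comm]

lemma exp_large (c τ : ℝ) (hτ : 0 < τ) (n : ℕ → ℕ) (hm : StrictMono n) :
    ∀ᶠ k in atTop, c ≤ Real.exp (τ * n k) := by
  have h : Tendsto (fun k => Real.exp (τ * n k)) atTop atTop :=
    Real.tendsto_exp_atTop.comp ((tendsto_natCast_atTop_atTop.comp hm.tendsto_atTop).const_mul_atTop hτ)
  exact h.eventually_ge_atTop c

/-- points with arbitrarily close large values -/
def BB (n : ℕ → ℕ) (P Q : ℕ → Polynomial ℂ) (s : ℝ) : Set ℂ :=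
  {z | ∀ η > 0, ∀ N : ℕ, ∃ z', dist z' z < η ∧ ∃ k, N ≤ k ∧
    Real.exp (s * n k) ≤ max ‖(Q k).eval z'‖ ‖(P k).eval z'‖}

lemma BB_closed (n : ℕ → ℕ) (P Q : ℕ → Polynomial ℂ) (s : ℝ) : IsClosed (BB n P Q s) := by
  apply isClosed_of_closure_subset
  intro z hz η hη N
  obtain ⟨y, hy, hyz⟩ := Metric.mem_closure_iff.1 hz (η / 2) (half_pos hη)
  obtain ⟨z', hz', h⟩ := hy (η / 2) (half_pos hη) N
  refine ⟨z', ?_, h⟩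
  have := dist_triangle z' y z
  rw [dist_comm y z] at this
  linarith

lemma main_pluripolar (n : ℕ → ℕ) (hmono : StrictMono n) (P Q : ℕ → Polynomial ℂ)
    (hP : ∀ k, (P k).natDegree ≤ n k) (hQ : ∀ k, (Q k).natDegree ≤ n k)
    (u ustar : ℂ × ℂ → EReal)
    (hu : u = fun p : ℂ × ℂ => Filter.limsup (fun k => ((1 / (n k : ℝ) : ℝ) : EReal) *
      elog (‖(Q k).eval p.1 * p.2 - (P k).eval p.1‖)) Filter.atTop)
    (hustar : ustar = fun p : ℂ × ℂ => Filter.limsup u (nhds p)) :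
    Pluripolar {p : ℂ × ℂ | u p < ustar p} := by
  have hnk : ∀ k, k ≤ n k := fun k => hmono.id_le k
  -- first family
  let I1 := {q : (ℕ × ℕ) × (ℚ × ℚ) // 1 ≤ q.1.1 ∧ q.2.1 < q.2.2}
  let K1 : I1 → Set ℂ := fun q => {z | ‖z‖ ≤ q.1.1.2 ∧
    (∀ k, q.1.1.1 ≤ k → max ‖(Q k).eval z‖ ‖(P k).eval z‖ ≤ Real.exp (q.1.2.1 * n k)) ∧
    z ∈ BB n P Q q.1.2.2}
  have hK1 : ∀ q, Zset {p : ℂ × ℂ | p.1 ∈ K1 q} := by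
    rintro ⟨⟨⟨N, R⟩, ⟨s1, s⟩⟩, hN, hs⟩
    simp only at hN hs
    apply Zset_of_monic
    have hcomp : IsCompact (K1 ⟨⟨⟨N, R⟩, ⟨s1, s⟩⟩, hN, hs⟩) := by
      refine (isCompact_closedBall (0 : ℂ) R).of_isClosed_subset ?_ ?_
      · have e1 : IsClosed {z : ℂ | ‖z‖ ≤ R} := isClosed_le continuous_norm continuous_const
        have e2 : IsClosed {z : ℂ | ∀ k, N ≤ k →
            max ‖(Q k).eval z‖ ‖(P k).eval z‖ ≤ Real.exp (s1 * n k)} := by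
          simp only [Set.ofPred_forall]
          refine isClosed_iInter fun k => isClosed_iInter fun _ => ?_
          exact isClosed_le ((Q k).continuous.norm.max (P k).continuous.norm) continuous_const
        exact e1.inter (e2.inter (BB_closed n P Q s))
      · rintro z ⟨hz, -⟩
        simpa using hz
    refine one_dim _ hcomp (ι := {k // N ≤ k} × Bool)
      (fun i => if i.2 then Q i.1.1 else P i.1.1) (fun i => n i.1.1)
      (fun i => hN.trans (i.1.2.trans (hnk _))) ?_ s1 s (by exact_mod_cast hs) ?_ ?_
    · rintro ⟨k, b⟩
      cases b
      · exact hP _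
      · exact hQ _
    · rintro ⟨k, b⟩ z ⟨-, hz, -⟩
      have := hz k.1 k.2
      cases b
      · exact (le_max_right _ _).trans this
      · exact (le_max_left _ _).trans this
    · rintro z ⟨-, -, hz⟩ η hη
      obtain ⟨z', hz', k, hk, hle⟩ := hz η hη N
      refine ⟨z', hz', ?_⟩
      rcases le_max_iff.1 hle with h | h
      · exact ⟨(⟨k, hk⟩, true), h⟩
      · exact ⟨(⟨k, hk⟩, false), h⟩
  obtain ⟨T, hT⟩ := thin_of_Zset_countable _ hK1
  -- second family
  let I2 := {q : (ℕ × ℕ × ℕ) × (ℚ × ℚ × ℚ) // 1 ≤ q.1.1 ∧ q.2.1 < q.2.2.1 ∧ q.2.2.1 < q.2.2.2}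
  let K2 : I2 → Set (ℂ × ℂ) := fun q => {p | ‖p‖ ≤ q.1.1.2.1 ∧
    (∀ k, q.1.1.1 ≤ k → ‖(Q k).eval p.1 * p.2 - (P k).eval p.1‖ ≤ Real.exp (q.1.2.1 * n k)) ∧
    p.1 ∈ BB n P Q q.1.2.2.2 ∧ 1 / ((q.1.1.2.2 : ℝ) + 1) ≤ T.X p}
  have hK2 : ∀ q, Zset (K2 q) := by
    rintro ⟨⟨⟨N, R, l⟩, ⟨t, s1, s⟩⟩, hN, hts, hs⟩
    simp only at hN hs hts
    have hcomp : IsCompact (K2 ⟨⟨⟨N, R, l⟩, ⟨t, s1, s⟩⟩, hN, hts, hs⟩) := by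
      refine (isCompact_closedBall (0 : ℂ × ℂ) R).of_isClosed_subset ?_ ?_
      · have e1 : IsClosed {z : ℂ × ℂ | ‖z‖ ≤ R} := isClosed_le continuous_norm continuous_const
        have e2 : IsClosed {p : ℂ × ℂ | ∀ k, N ≤ k →
            ‖(Q k).eval p.1 * p.2 - (P k).eval p.1‖ ≤ Real.exp (t * n k)} := by
          simp only [Set.ofPred_forall]
          refine isClosed_iInter fun k => isClosed_iInter fun _ => ?_
          refine isClosed_le ?_ continuous_const
          exact ((((Q k).continuous.comp continuous_fst).mul continuous_snd).sub
            ((P k).continuous.comp continuous_fst)).norm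
        have e3 : IsClosed {p : ℂ × ℂ | 1 / ((l : ℝ) + 1) ≤ T.X p} := by
          have := (T.X_usc (1 / ((l : ℝ) + 1))).isClosed_compl
          convert this using 1
          ext p; simp
        exact e1.inter (e2.inter (((BB_closed n P Q s).preimage continuous_fst).inter e3))
      · rintro z ⟨hz, -⟩
        simpa using hz
    have hts' : (t : ℝ) < s1 := by exact_mod_cast hts
    refine Zset_of_two _ hcomp (κ := {k // N ≤ k}) (fun k => P k.1) (fun k => Q k.1)
      (fun k => n k.1) (fun k => hN.trans (k.2.trans (hnk _))) (fun k => hP _) (fun k => hQ _)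
      t (((t : ℝ) + s1) / 2) (by linarith) ?_ ?_
    · rintro ⟨k, hk⟩ p ⟨-, hp, -⟩
      exact hp k hk
    · rintro p ⟨hpR, hp, hpB, hpX⟩ N'
      simp only at hpR hp hpB hpX
      obtain ⟨N2, hN2⟩ := eventually_atTop.1 (exp_large ((R : ℝ) + 2) (((s1 : ℝ) - t) / 2)
        (by linarith) n hmono)
      have hnot : ¬ p.1 ∈ K1 ⟨⟨⟨max (max N N') N2, R⟩, ⟨s1, s⟩⟩,
          hN.trans ((le_max_left _ _).trans (le_max_left _ _)), hs⟩ := by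
        intro hmem
        have := hT p (Set.mem_iUnion.2 ⟨_, hmem⟩)
        rw [this] at hpX
        have : (0 : ℝ) < 1 / ((l : ℝ) + 1) := by positivity
        linarith
      have hex : ∃ k, max (max N N') N2 ≤ k ∧
          Real.exp (s1 * n k) < max ‖(Q k).eval p.1‖ ‖(P k).eval p.1‖ := by
        by_contra hcon
        push Not at hcon
        exact hnot ⟨(norm_fst_le p).trans hpR, hcon, hpB⟩
      obtain ⟨k, hk, hlt⟩ := hex
      have hkN : N ≤ k := ((le_max_left _ _).trans (le_max_left _ _)).trans hk
      have hkN' : N' ≤ k := ((le_max_right _ _).trans (le_max_left _ _)).trans hk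
      have hkN2 : N2 ≤ k := (le_max_right _ _).trans hk
      refine ⟨⟨k, hkN⟩, hkN'.trans (hnk k), ?_⟩
      simp only
      by_contra hcon
      push Not at hcon
      have hg := hp k hkN
      have hw : ‖p.2‖ ≤ R := (norm_snd_le p).trans hpR
      have hPle : ‖(P k).eval p.1‖ ≤ ‖(Q k).eval p.1‖ * R + Real.exp (t * n k) := by
        have h3 := norm_sub_le ((Q k).eval p.1 * p.2) ((Q k).eval p.1 * p.2 - (P k).eval p.1)
        rw [sub_sub_cancel, norm_mul] at h3
        have : ‖(Q k).eval p.1‖ * ‖p.2‖ ≤ ‖(Q k).eval p.1‖ * R :=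
          mul_le_mul_of_nonneg_left hw (norm_nonneg _)
        linarith
      have hE : Real.exp (t * n k) ≤ Real.exp (((t : ℝ) + s1) / 2 * n k) := by
        apply Real.exp_le_exp.2
        have : (0 : ℝ) ≤ n k := by positivity
        nlinarith
      have hE2 : ((R : ℝ) + 2) * Real.exp (((t : ℝ) + s1) / 2 * n k) ≤ Real.exp (s1 * n k) := by
        calc _ ≤ Real.exp (((s1 : ℝ) - t) / 2 * n k) * Real.exp (((t : ℝ) + s1) / 2 * n k) :=
              mul_le_mul_of_nonneg_right (hN2 k hkN2) (Real.exp_pos _).le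
          _ = _ := by rw [← Real.exp_add]; ring_nf
      have hR0 : (0 : ℝ) ≤ R := by positivity
      have hpos := Real.exp_pos (((t : ℝ) + s1) / 2 * n k)
      have hle : max ‖(Q k).eval p.1‖ ‖(P k).eval p.1‖
          ≤ ((R : ℝ) + 2) * Real.exp (((t : ℝ) + s1) / 2 * n k) := by
        apply max_le
        · nlinarith
        · have : ‖(Q k).eval p.1‖ * R ≤ Real.exp (((t : ℝ) + s1) / 2 * n k) * R :=
            mul_le_mul_of_nonneg_right hcon hR0
          nlinarith
      linarith
  have hthin : Thin ({p | T.X p = 0} ∪ ⋃ q, K2 q) :=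
    Thin.union ⟨T, fun p hp => hp⟩ (thin_of_Zset_countable _ hK2)
  refine (hthin.mono ?_).pluripolar
  intro p hp
  by_cases hX : T.X p = 0
  · exact Or.inl hX
  right
  have hXp : 0 < T.X p := lt_of_le_of_ne (T.X_nonneg p) (Ne.symm hX)
  have hp' : u p < ustar p := hp
  obtain ⟨t, ht1, ht2⟩ := EReal.exists_rat_btwn_of_lt hp'
  obtain ⟨s3, hs1, hs2⟩ := EReal.exists_rat_btwn_of_lt ht2
  have hts : t < s3 := by
    have : ((t : ℝ) : EReal) < ((s3 : ℝ) : EReal) := hs1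
    exact_mod_cast EReal.coe_lt_coe_iff.1 this
  have hA : ∀ᶠ k in atTop, ‖(Q k).eval p.1 * p.2 - (P k).eval p.1‖ ≤ Real.exp (t * n k) := by
    rw [hu] at ht1
    filter_upwards [eventually_lt_of_limsup_lt ht1, eventually_ge_atTop 1] with k hk hk1
    exact ((term_lt (hk1.trans (hnk k)) (norm_nonneg _) t).1 hk).le
  obtain ⟨N, hN⟩ := eventually_atTop.1 hA
  obtain ⟨R, hR⟩ := exists_nat_ge ‖p‖
  obtain ⟨l, hl⟩ := exists_nat_one_div_lt hXp
  refine Set.mem_iUnion.2 ⟨⟨⟨⟨max N 1, R, l⟩, ⟨t, t + (s3 - t) / 3, t + 2 * (s3 - t) / 3⟩⟩,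
    le_max_right _ _, by simp only; linarith, by simp only; linarith⟩, hR,
    fun k hk => hN k ((le_max_left _ _).trans hk), ?_, hl.le⟩
  intro η hη M
  set s : ℚ := t + 2 * (s3 - t) / 3 with hs
  have hss : (s : ℝ) < s3 := by
    have : s < s3 := by rw [hs]; linarith
    exact_mod_cast this
  obtain ⟨N2, hN2⟩ := eventually_atTop.1 (exp_large (‖p.2‖ + 2) ((s3 : ℝ) - s)
    (by linarith) n hmono)
  have hs2' : ((s3 : ℝ) : EReal) < limsup u (nhds p) := by
    rw [hustar] at hs2; exact hs2
  have hfr := (frequently_lt_of_lt_limsup (by isBoundedDefault) hs2').and_eventually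
    (Metric.ball_mem_nhds p (lt_min hη one_pos))
  obtain ⟨p', hp'1, hp'2⟩ := hfr.exists
  have hd : dist p' p < min η 1 := hp'2
  have hd1 : dist p'.1 p.1 < η := lt_of_le_of_lt (le_max_left _ _) (hd.trans_le (min_le_left _ _))
  have hd2 : dist p'.2 p.2 < 1 := lt_of_le_of_lt (le_max_right _ _) (hd.trans_le (min_le_right _ _))
  refine ⟨p'.1, hd1, ?_⟩
  rw [hu] at hp'1
  obtain ⟨k, hk1, hk2⟩ := ((frequently_lt_of_lt_limsup (by isBoundedDefault) hp'1).and_eventually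
    (eventually_ge_atTop (max (max M N2) 1))).exists
  have hkM : M ≤ k := ((le_max_left _ _).trans (le_max_left _ _)).trans hk2
  have hkN2 : N2 ≤ k := ((le_max_right _ _).trans (le_max_left _ _)).trans hk2
  have hk3 : 1 ≤ k := (le_max_right _ _).trans hk2
  refine ⟨k, hkM, ?_⟩
  have hge : Real.exp (s3 * n k) ≤ ‖(Q k).eval p'.1 * p'.2 - (P k).eval p'.1‖ := by
    by_contra hcon
    exact absurd hk1 (not_lt.2 ((term_lt (hk3.trans (hnk k)) (norm_nonneg _) s3).2 (not_le.1 hcon)).le)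
  set m := max ‖(Q k).eval p'.1‖ ‖(P k).eval p'.1‖ with hm
  have hm0 : 0 ≤ m := (norm_nonneg _).trans (le_max_left _ _)
  have hw : ‖p'.2‖ ≤ ‖p.2‖ + 1 := by
    have := norm_le_norm_add_norm_sub' p'.2 p.2
    rw [dist_eq_norm] at hd2
    linarith
  have hle : ‖(Q k).eval p'.1 * p'.2 - (P k).eval p'.1‖ ≤ m * (‖p.2‖ + 2) := by
    refine (norm_sub_le _ _).trans ?_
    rw [norm_mul]
    have e1 : ‖(Q k).eval p'.1‖ * ‖p'.2‖ ≤ m * (‖p.2‖ + 1) :=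
      mul_le_mul (le_max_left _ _) hw (norm_nonneg _) hm0
    have e2 : ‖(P k).eval p'.1‖ ≤ m := le_max_right _ _
    linarith
  have h4 : Real.exp (s3 * n k) = Real.exp (s * n k) * Real.exp (((s3 : ℝ) - s) * n k) := by
    rw [← Real.exp_add]; ring_nf
  have h5 := hN2 k hkN2
  have h6 : Real.exp (s * n k) * (‖p.2‖ + 2) ≤ m * (‖p.2‖ + 2) := by
    calc _ ≤ Real.exp (s * n k) * Real.exp (((s3 : ℝ) - s) * n k) :=
          mul_le_mul_of_nonneg_left h5 (Real.exp_pos _).le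
      _ ≤ _ := by rw [← h4]; exact hge.trans hle
  exact le_of_mul_le_mul_right h6 (by positivity)

lemma claim_one (n : ℕ → ℕ) (hmono : StrictMono n) (q p : ℕ → ℂ) (f : ℂ) (α : ℝ)
    (hα : α ∈ Set.Ioo (0 : ℝ) 1) (hq0 : ∀ k, q k ≠ 0) (hq1 : ∀ k, ‖q k‖ ≤ 1)
    (hap : ∀ k, ‖f - p k / q k‖ ≤ α ^ n k)
    (hlim : Filter.limsup (fun k => ‖q k‖ ^ (1 / (n k : ℝ))) Filter.atTop ≠ 0) :
    ∃ A B : ℝ, A < B ∧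
      Filter.limsup (fun k => ((1 / (n k : ℝ) : ℝ) : EReal) * elog ‖q k * f - p k‖) atTop ≤ A ∧
      ∀ w, w ≠ f → (B : EReal) ≤
        Filter.limsup (fun k => ((1 / (n k : ℝ) : ℝ) : EReal) * elog ‖q k * w - p k‖) atTop := by
  have hnk : ∀ k, k ≤ n k := fun k => hmono.id_le k
  set a : ℕ → ℝ := fun k => ‖q k‖ ^ (1 / (n k : ℝ)) with ha
  have ha0 : ∀ k, 0 ≤ a k := fun k => by positivity
  have ha1 : ∀ k, a k ≤ 1 := fun k => Real.rpow_le_one (norm_nonneg _) (hq1 k) (by positivity)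
  have hbd : IsBoundedUnder (· ≤ ·) atTop a := isBoundedUnder_of ⟨1, ha1⟩
  have hbd' : IsBoundedUnder (· ≥ ·) atTop a := isBoundedUnder_of ⟨0, ha0⟩
  set ρ := limsup a atTop with hρ
  have hρ0 : 0 < ρ := by
    refine lt_of_le_of_ne ?_ (Ne.symm hlim)
    exact le_limsup_of_frequently_le (Frequently.of_forall ha0) hbd
  have hq : ∀ k, 1 ≤ k → ‖q k‖ = a k ^ n k := by
    intro k hk
    have : (n k : ℝ) ≠ 0 := by
      have := hk.trans (hnk k)
      positivity
    rw [ha]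
    simp only
    rw [← Real.rpow_natCast, ← Real.rpow_mul (norm_nonneg _), one_div, inv_mul_cancel₀ this,
      Real.rpow_one]
  have hfac : ∀ k w, q k * w - p k = q k * (w - p k / q k) := by
    intro k w
    have := hq0 k
    field_simp
  have hlα : Real.log α < 0 := Real.log_neg hα.1 hα.2
  obtain ⟨ε, hε, hεα⟩ : ∃ ε : ℝ, 0 < ε ∧ Real.log α = -(4 * ε) :=
    ⟨-Real.log α / 4, by linarith, by ring⟩
  have hαe : ∀ m : ℕ, α ^ m = Real.exp (-(4 * ε) * m) := by
    intro m
    rw [← hεα, mul_comm, Real.exp_nat_mul, Real.exp_log hα.1]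
  have hρe : ∀ c : ℝ, ∀ m : ℕ, (ρ * Real.exp c) ^ m = Real.exp ((Real.log ρ + c) * m) := by
    intro c m
    rw [mul_comm _ (m : ℝ), Real.exp_nat_mul, Real.exp_add, Real.exp_log hρ0]
  refine ⟨Real.log ρ - 3 * ε, Real.log ρ - 2 * ε, by linarith, ?_, ?_⟩
  · have h1 : ρ < ρ * Real.exp ε := lt_mul_of_one_lt_right hρ0 (Real.one_lt_exp_iff.2 hε)
    refine limsup_le_of_le (by isBoundedDefault) ?_
    filter_upwards [eventually_lt_of_limsup_lt h1 hbd, eventually_ge_atTop 1] with k hk hk1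
    refine ((term_lt (hk1.trans (hnk k)) (norm_nonneg _) _).2 ?_).le
    rw [hfac, norm_mul]
    have h2 : ‖q k‖ < Real.exp ((Real.log ρ + ε) * n k) := by
      rw [hq k hk1, ← hρe]
      exact pow_lt_pow_left₀ hk (ha0 k) (by have := hnk k; omega)
    have h3 := hap k
    rw [hαe] at h3
    calc _ ≤ ‖q k‖ * Real.exp (-(4 * ε) * n k) := mul_le_mul_of_nonneg_left h3 (norm_nonneg _)
      _ < Real.exp ((Real.log ρ + ε) * n k) * Real.exp (-(4 * ε) * n k) :=
          mul_lt_mul_of_pos_right h2 (Real.exp_pos _)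
      _ = _ := by rw [← Real.exp_add]; ring_nf
  · intro w hw
    have hδ : 0 < ‖w - f‖ := norm_pos_iff.2 (sub_ne_zero.2 hw)
    have h1 : ρ * Real.exp (-ε) < ρ := mul_lt_of_lt_one_right hρ0 (Real.exp_lt_one_iff.2 (by linarith))
    refine le_limsup_of_frequently_le ?_ (by isBoundedDefault)
    refine ((frequently_lt_of_lt_limsup hbd'.isCoboundedUnder_le h1).and_eventually
      ((eventually_ge_atTop 1).and (exp_large (2 / ‖w - f‖) ε hε n hmono))).mono ?_
    rintro k ⟨hk, hk1, hk2⟩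
    rw [← not_lt, term_lt (hk1.trans (hnk k)) (norm_nonneg _), not_lt, hfac, norm_mul]
    have h2 : Real.exp ((Real.log ρ + -ε) * n k) ≤ ‖q k‖ := by
      rw [hq k hk1, ← hρe]
      exact pow_le_pow_left₀ (by positivity) hk.le _
    have h3 := hap k
    rw [hαe] at h3
    rw [div_le_iff₀ hδ] at hk2
    have h5 : Real.exp (-ε * n k) * Real.exp (ε * n k) = 1 := by
      rw [← Real.exp_add]; simp
    have h6 : Real.exp (-(4 * ε) * n k) ≤ Real.exp (-ε * n k) := by
      apply Real.exp_le_exp.2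
      have : (0 : ℝ) ≤ n k := by positivity
      nlinarith
    have h7 : 2 * Real.exp (-ε * n k) ≤ ‖w - f‖ := by
      have := mul_le_mul_of_nonneg_left hk2 (Real.exp_pos (-ε * n k)).le
      rw [← mul_assoc, h5] at this
      linarith
    have h8 : ‖w - f‖ ≤ ‖w - p k / q k‖ + ‖f - p k / q k‖ := by
      have := norm_sub_le (w - p k / q k) (f - p k / q k)
      rwa [sub_sub_sub_cancel_right] at this
    calc _ = Real.exp ((Real.log ρ + -ε) * n k) * Real.exp (-ε * n k) := by
          rw [← Real.exp_add]; ring_nf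
      _ ≤ _ := mul_le_mul h2 (by linarith) (Real.exp_pos _).le (norm_nonneg _)

/-- With `u(z,w) = limsup_k (1/n_k)·log|q_{n_k}(z)·w − p_{n_k}(z)|` and `u*` its upper
semicontinuous regularization, every `x ∈ Δ` with `limsup_k |q_{n_k}(x)|^{1/n_k} ≠ 0`
satisfies `u(x,f(x)) < u*(x,f(x))`, i.e. `(x,f(x))` lies in the negligible set
`E = {u < u*}`, which is pluripolar in `ℂ²`. -/
theorem negligible_set_pluripolar (a b : ℝ) (hab : a < b) (f : ℝ → ℝ)
    (hf : ContinuousOn f (Set.Icc a b)) (α : ℝ) (hα : α ∈ Set.Ioo (0 : ℝ) 1)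
    (n : ℕ → ℕ) (hmono : StrictMono n) (P Q : ℕ → Polynomial ℂ)
    (hP : ∀ k, (P k).natDegree ≤ n k) (hQ : ∀ k, (Q k).natDegree ≤ n k)
    (hQ0 : ∀ k, ∀ x ∈ Set.Icc a b, (Q k).eval (x : ℂ) ≠ 0)
    (hPnorm : ∀ k, ∀ x ∈ Set.Icc a b, ‖(P k).eval (x : ℂ)‖ ≤ 1)
    (hQnorm : ∀ k, IsGreatest
      ((fun x : ℝ => ‖(Q k).eval (x : ℂ)‖) '' Set.Icc a b) 1)
    (happrox : ∀ k, ∀ x ∈ Set.Icc a b,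
      ‖(f x : ℂ) - (P k).eval (x : ℂ) / (Q k).eval (x : ℂ)‖ ≤ α ^ n k)
    (u ustar : ℂ × ℂ → EReal)
    (hu : u = fun p : ℂ × ℂ => Filter.limsup (fun k => ((1 / (n k : ℝ) : ℝ) : EReal) *
      elog (‖(Q k).eval p.1 * p.2 - (P k).eval p.1‖)) Filter.atTop)
    (hustar : ustar = fun p : ℂ × ℂ => Filter.limsup u (nhds p)) :
    (∀ x ∈ Set.Icc a b,
      Filter.limsup (fun k => ‖(Q k).eval (x : ℂ)‖ ^ (1 / (n k : ℝ)))
        Filter.atTop ≠ 0 →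
      u ((x : ℂ), (f x : ℂ)) < ustar ((x : ℂ), (f x : ℂ)) ∧
      ((x : ℂ), (f x : ℂ)) ∈ {p : ℂ × ℂ | u p < ustar p}) ∧
    Pluripolar {p : ℂ × ℂ | u p < ustar p} := by
  refine ⟨fun x hx hlim => ?_, main_pluripolar n hmono P Q hP hQ u ustar hu hustar⟩
  suffices h : u ((x : ℂ), (f x : ℂ)) < ustar ((x : ℂ), (f x : ℂ)) from ⟨h, h⟩
  obtain ⟨A, B, hAB, hA, hB⟩ := claim_one n hmono (fun k => (Q k).eval (x : ℂ))
    (fun k => (P k).eval (x : ℂ)) (f x) α hα (fun k => hQ0 k x hx)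
    (fun k => (hQnorm k).2 ⟨x, hx, rfl⟩) (fun k => happrox k x hx) hlim
  have h1 : u ((x : ℂ), (f x : ℂ)) ≤ A := by rw [hu]; exact hA
  have h2 : (B : EReal) ≤ ustar ((x : ℂ), (f x : ℂ)) := by
    rw [hustar]
    refine le_limsup_of_frequently_le ?_ (by isBoundedDefault)
    have ht : Tendsto (fun m : ℕ => ((x : ℂ), (f x : ℂ) + ((1 / ((m : ℝ) + 1) : ℝ) : ℂ))) atTop
        (nhds ((x : ℂ), (f x : ℂ))) := by
      refine Tendsto.prodMk_nhds tendsto_const_nhds ?_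
      have h3 : Tendsto (fun m : ℕ => ((1 / ((m : ℝ) + 1) : ℝ) : ℂ)) atTop (nhds ((0 : ℝ) : ℂ)) :=
        (Complex.continuous_ofReal.tendsto 0).comp tendsto_one_div_add_atTop_nhds_zero_nat
      simpa using tendsto_const_nhds.add h3
    refine ht.frequently (Frequently.of_forall fun m => ?_)
    rw [hu]
    refine hB _ ?_
    intro h0
    rw [add_eq_left] at h0
    have : (1 / ((m : ℝ) + 1) : ℝ) = 0 := by exact_mod_cast h0
    have h4 : (0 : ℝ) < 1 / ((m : ℝ) + 1) := by positivity
    linarith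
  exact h1.trans_lt (lt_of_lt_of_le (EReal.coe_lt_coe_iff.2 hAB) h2)
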